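/- Let H ≤ G be an embedding of linearly reductive quantum groups. The canonical map can: C(G,H) → Ẑ(G,H), sending the generator g_V for V ∈ Ĝ to the central character of V restricted to the relative center Z(G,H) = Z(G) ∩ H, is a group isomorphism. -/

import Mathlib

/- Common infrastructure: right comodules over coalgebras, simplicity,
cosemisimplicity, subcoalgebras, adjoint coactions, normality, etc. -/

open TensorProduct

universe u

namespace QG

variable (k : Type u) [Field k]

section Coalg

variable (C : Type u) [AddCommGroup C] [Module k C] [Coalgebra k C]

/-- `ρ : V →ₗ[k] V ⊗[k] C` is a (coassociative, counital) right coaction. -/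
structure IsComod {V : Type u} [AddCommGroup V] [Module k V]
    (ρ : V →ₗ[k] V ⊗[k] C) : Prop where
  coassoc : ∀ v : V, ρ.rTensor C (ρ v) =
    (TensorProduct.assoc k V C C).symm.toLinearMap
      ((Coalgebra.comul (R := k) (A := C)).lTensor V (ρ v))
  counit : ∀ v : V, (TensorProduct.rid k V)
      ((Coalgebra.counit (R := k) (A := C)).lTensor V (ρ v)) = v

/-- A submodule `U ≤ V` is a subcomodule if the coaction restricts to it,
i.e. maps `U` into the image of `U ⊗ C` in `V ⊗ C`. -/
def IsSubcomod {V : Type u} [AddCommGroup V] [Module k V]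
    (ρ : V →ₗ[k] V ⊗[k] C) (U : Submodule k V) : Prop :=
  ∀ u ∈ U, ρ u ∈ LinearMap.range ((U.subtype).rTensor C)

/-- A simple subcomodule: a nonzero subcomodule with no nonzero proper
subcomodules below it. -/
def IsSimpleSubcomod {V : Type u} [AddCommGroup V] [Module k V]
    (ρ : V →ₗ[k] V ⊗[k] C) (U : Submodule k V) : Prop :=
  IsSubcomod k C ρ U ∧ U ≠ ⊥ ∧
    ∀ U' : Submodule k V, U' ≤ U → IsSubcomod k C ρ U' → U' = ⊥ ∨ U' = U

/-- A comodule is simple if it is simple as a subcomodule of itself. -/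
def IsSimpleComod {V : Type u} [AddCommGroup V] [Module k V]
    (ρ : V →ₗ[k] V ⊗[k] C) : Prop :=
  IsSimpleSubcomod k C ρ ⊤

/-- Morphisms of right `C`-comodules. -/
def IsComodHom {V W : Type u} [AddCommGroup V] [Module k V]
    [AddCommGroup W] [Module k W]
    (ρV : V →ₗ[k] V ⊗[k] C) (ρW : W →ₗ[k] W ⊗[k] C) (f : V →ₗ[k] W) : Prop :=
  ρW ∘ₗ f = (f.rTensor C) ∘ₗ ρV

/-- `C` is cosemisimple: every right `C`-comodule is an (internal) direct sum
of simple subcomodules. -/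
def IsCosemisimple : Prop :=
  ∀ (V : Type u) [AddCommGroup V] [Module k V]
    (ρ : V →ₗ[k] V ⊗[k] C), IsComod k C ρ →
    ∃ (ι : Type u) (U : ι → Submodule k V),
      (∀ i, IsSimpleSubcomod k C ρ (U i)) ∧
      iSupIndep U ∧ (⨆ i, U i) = ⊤

/-- Subcoalgebras of `C`, as submodules. -/
def IsSubcoalgebra (D : Submodule k C) : Prop :=
  ∀ x ∈ D, Coalgebra.comul (R := k) x ∈
    LinearMap.range (TensorProduct.map D.subtype D.subtype)

/-- Simple subcoalgebras: nonzero ones with no nonzero proper subcoalgebras. -/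
def IsSimpleSubcoalgebra (D : Submodule k C) : Prop :=
  IsSubcoalgebra k C D ∧ D ≠ ⊥ ∧
    ∀ D' : Submodule k C, D' ≤ D → IsSubcoalgebra k C D' → D' = ⊥ ∨ D' = D

/-- The coefficient space of a comodule: the smallest submodule `D ≤ C` such
that the coaction factors through `V ⊗ D`.  For a simple comodule this is its
coefficient coalgebra. -/
def coeffSpace {V : Type u} [AddCommGroup V] [Module k V]
    (ρ : V →ₗ[k] V ⊗[k] C) : Submodule k C :=
  sInf {D : Submodule k C | ∀ v : V, ρ v ∈ LinearMap.range ((D.subtype).lTensor V)}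

/-- Corestriction of a coaction along a linear map of coalgebras `π : C → D`. -/
noncomputable def cores {D : Type u} [AddCommGroup D] [Module k D]
    {V : Type u} [AddCommGroup V] [Module k V]
    (π : C →ₗ[k] D) (ρ : V →ₗ[k] V ⊗[k] C) : V →ₗ[k] V ⊗[k] D :=
  (π.lTensor V) ∘ₗ ρ

end Coalg

section Bialg

variable (H : Type u) [Ring H] [Bialgebra k H]

/-- An invariant vector for a coaction of a bialgebra. -/
def IsInvariant {V : Type u} [AddCommGroup V] [Module k V]
    (ρ : V →ₗ[k] V ⊗[k] H) (v : V) : Prop :=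
  ρ v = v ⊗ₜ[k] (1 : H)

/-- The tensor product coaction on `V ⊗ W` for a bialgebra `H`:
`v ⊗ w ↦ (v₀ ⊗ w₀) ⊗ v₁w₁`. -/
noncomputable def tensorCoact {V W : Type u}
    [AddCommGroup V] [Module k V] [AddCommGroup W] [Module k W]
    (ρV : V →ₗ[k] V ⊗[k] H) (ρW : W →ₗ[k] W ⊗[k] H) :
    (V ⊗[k] W) →ₗ[k] (V ⊗[k] W) ⊗[k] H :=
  ((LinearMap.mul' k H).lTensor (V ⊗[k] W)) ∘ₗ
    (TensorProduct.tensorTensorTensorComm k V H W H).toLinearMap ∘ₗ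
    (TensorProduct.map ρV ρW)

/-- `O(G/H)`: the right coinvariants `{x | (id ⊗ π)Δ(x) = x ⊗ 1}` of a
quotient map `π`. -/
noncomputable def quotientSpaceLeft {B : Type u} [AddCommGroup B] [Module k B] [One B]
    (π : H →ₗ[k] B) : Submodule k H :=
  LinearMap.ker ((π.lTensor H) ∘ₗ (Coalgebra.comul (R := k) (A := H)) -
    (TensorProduct.mk k H B).flip 1)

/-- `O(H\G)`: the left coinvariants `{x | (π ⊗ id)Δ(x) = 1 ⊗ x}`. -/
noncomputable def quotientSpaceRight {B : Type u} [AddCommGroup B] [Module k B] [One B]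
    (π : H →ₗ[k] B) : Submodule k H :=
  LinearMap.ker ((π.rTensor H) ∘ₗ (Coalgebra.comul (R := k) (A := H)) -
    (TensorProduct.mk k B H) 1)

end Bialg

section Hopf

variable (H : Type u) [Ring H] [HopfAlgebra k H]

/-- Iterated comultiplication `x ↦ x₁ ⊗ (x₂ ⊗ x₃)`. -/
noncomputable def comul2 : H →ₗ[k] H ⊗[k] (H ⊗[k] H) :=
  ((Coalgebra.comul (R := k) (A := H)).lTensor H) ∘ₗ (Coalgebra.comul (R := k) (A := H))

/-- The right adjoint coaction `x ↦ x₂ ⊗ S(x₁)x₃`. -/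
noncomputable def adR : H →ₗ[k] H ⊗[k] H :=
  ((LinearMap.mul' k H).lTensor H) ∘ₗ
    (TensorProduct.assoc k H H H).toLinearMap ∘ₗ
    (((TensorProduct.comm k H H).toLinearMap).rTensor H) ∘ₗ
    (TensorProduct.assoc k H H H).symm.toLinearMap ∘ₗ
    ((HopfAlgebra.antipode (R := k) (A := H)).rTensor (H ⊗[k] H)) ∘ₗ
    comul2 k H

/-- The left adjoint coaction `x ↦ x₁S(x₃) ⊗ x₂` (a left coaction, with the
coacting tensorand on the left). -/
noncomputable def adL : H →ₗ[k] H ⊗[k] H :=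
  ((LinearMap.mul' k H).rTensor H) ∘ₗ
    (TensorProduct.assoc k H H H).symm.toLinearMap ∘ₗ
    (((TensorProduct.comm k H H).toLinearMap).lTensor H) ∘ₗ
    (((HopfAlgebra.antipode (R := k) (A := H)).lTensor H).lTensor H) ∘ₗ
    comul2 k H

variable {B : Type u} [AddCommGroup B] [Module k B]

/-- `π : O(G) → O(H)` is right-normal: it is a morphism of right
`O(G)`-comodules for the right adjoint coaction, i.e. the right adjoint
coaction descends along `π`. -/
def IsRightNormal (π : H →ₗ[k] B) : Prop :=
  ∃ ρ : B →ₗ[k] B ⊗[k] H, ρ ∘ₗ π = (π.rTensor H) ∘ₗ adR k H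

/-- `π : O(G) → O(H)` is left-normal: the left adjoint coaction descends
along `π`. -/
def IsLeftNormal (π : H →ₗ[k] B) : Prop :=
  ∃ lam : B →ₗ[k] H ⊗[k] B, lam ∘ₗ π = (π.lTensor H) ∘ₗ adL k H

end Hopf

end QG

namespace QG

variable (k : Type u) [Field k]

section Coalg2

variable (C : Type u) [AddCommGroup C] [Module k C] [Coalgebra k C]

/-- A bundled simple right `C`-comodule. -/
structure SimpleComodule where
  V : Type u
  [addCommGroup : AddCommGroup V]
  [module : Module k V]
  ρ : V →ₗ[k] V ⊗[k] C
  isComod : IsComod k C ρ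
  isSimple : IsSimpleComod k C ρ

attribute [instance] SimpleComodule.addCommGroup SimpleComodule.module

/-- A simple comodule `(T, ρT)` is a constituent of a comodule `(V, ρV)`
(over a cosemisimple coalgebra) iff there is a nonzero comodule map `T → V`. -/
def IsConstituent {T V : Type u} [AddCommGroup T] [Module k T]
    [AddCommGroup V] [Module k V]
    (ρT : T →ₗ[k] T ⊗[k] C) (ρV : V →ₗ[k] V ⊗[k] C) : Prop :=
  ∃ f : T →ₗ[k] V, f ≠ 0 ∧ IsComodHom k C ρT ρV f

/-- Isomorphism of (simple) comodules. -/
def comodIsoRel (X Y : SimpleComodule k C) : Prop :=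
  ∃ e : X.V ≃ₗ[k] Y.V, IsComodHom k C X.ρ Y.ρ e.toLinearMap

/-- The set `Ĉ` of isomorphism classes of simple right `C`-comodules. -/
def SimpleComodQuot := Quot (comodIsoRel k C)

/-- The isomorphism class of a simple comodule. -/
def SimpleComodule.cls (X : SimpleComodule k C) : SimpleComodQuot k C :=
  Quot.mk _ X

/-- Group-like elements of a coalgebra; these correspond to the
one-dimensional comodules, i.e. to characters. -/
def IsGroupLike (a : C) : Prop :=
  Coalgebra.counit (R := k) (A := C) a = (1 : k) ∧
    Coalgebra.comul (R := k) (A := C) a = a ⊗ₜ[k] a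

/-- A linear map `φ : C → Z` out of a coalgebra is central if
`φ(x₁) ⊗ x₂ = φ(x₂) ⊗ x₁`. -/
def IsCentralMap {Z : Type u} [AddCommGroup Z] [Module k Z] (φ : C →ₗ[k] Z) : Prop :=
  (φ.rTensor C) ∘ₗ (Coalgebra.comul (R := k) (A := C)) =
    (φ.rTensor C) ∘ₗ (TensorProduct.comm k C C).toLinearMap ∘ₗ
      (Coalgebra.comul (R := k) (A := C))

/-- The simple comodule `X` has "central character" `g` with respect to the
quotient map `γ : C → Z`: corestricted along `γ`, the coaction on `X` is a sum
of copies of the character `g`. -/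
def HasCentralChar {Z : Type u} [AddCommGroup Z] [Module k Z]
    (γ : C →ₗ[k] Z) (X : SimpleComodule k C) (g : Z) : Prop :=
  ∀ v : X.V, cores k C γ X.ρ v = v ⊗ₜ[k] g

end Coalg2

/-- The k-span of the set of products `g * a`, `a ∈ Am`; for `Am` a submodule
this is the left ideal generated by `Am`. -/
def leftIdealGen {G : Type u} [Ring G] [Module k G] (Am : Submodule k G) :
    Submodule k G :=
  Submodule.span k {x : G | ∃ g : G, ∃ a ∈ Am, x = g * a}

end QG

namespace QG

variable (k : Type u) [Field k]
variable (G Hh : Type u) [Ring G] [HopfAlgebra k G] [Ring Hh] [HopfAlgebra k Hh]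

/-- The defining relators of the relative chain group `C(G,H)`: one relator
`g_U (g_V g_W)⁻¹` whenever `hom_H(U, V ⊗ W) ≠ 0`, i.e. whenever the
restrictions to `H` of `U` and `V ⊗ W` are not disjoint. -/
noncomputable def chainRels (π : G →ₐc[k] Hh) :
    Set (FreeGroup (SimpleComodQuot k G)) :=
  {r | ∃ U V W : SimpleComodule k G,
    (∃ f : U.V →ₗ[k] V.V ⊗[k] W.V, f ≠ 0 ∧
      IsComodHom k Hh (cores k G (π : G →ₗ[k] Hh) U.ρ)
        (cores k G (π : G →ₗ[k] Hh) (tensorCoact k G V.ρ W.ρ)) f) ∧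
    r = FreeGroup.of U.cls * (FreeGroup.of V.cls * FreeGroup.of W.cls)⁻¹}

/-- The relative chain group `C(G,H)`: generators `g_V`, `V ∈ Ĝ`, and
relations `g_U = g_V g_W` whenever `U` and `V ⊗ W` are not disjoint over `H`. -/
noncomputable def ChainGroup (π : G →ₐc[k] Hh) : Type (u + 1) :=
  PresentedGroup (chainRels k G Hh π)

noncomputable instance (π : G →ₐc[k] Hh) : Group (ChainGroup k G Hh π) :=
  inferInstanceAs (Group (PresentedGroup (chainRels k G Hh π)))

/-- The generator `g_V` of the chain group attached to `V ∈ Ĝ`. -/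
noncomputable def chainGen (π : G →ₐc[k] Hh) (x : SimpleComodQuot k G) :
    ChainGroup k G Hh π :=
  PresentedGroup.of x

end QG

/-!
The matrix coefficients of the simple comodules span a cosemisimple coalgebra, so a linear map out
of it may be prescribed by choosing one value per simple. Over a cosemisimple Hopf algebra the
choices in a group `M` that are compatible with tensor products give in this way the bialgebra maps
into the group algebra `k[M]` under which every simple has a character; such maps are central.

The assignment `V ↦ g_V` descends to the simples `T` of `H`, as the generators of any two `V` whose
restrictions contain `T` agree. The map `O(G) → k[C(G,H)]` it defines is therefore central and
factors through `O(H)`, hence it factors through `O(Z(G,H))`, and this makes `can` injective.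
Conversely the characters of `Z(G,H)` coming from simples of `G` span `O(Z(G,H))`; distinct
group-like elements are linearly independent, so there are no other characters.
-/

namespace QG

section Slice

variable {k : Type*} [Field k] {V W N P : Type*} [AddCommGroup V] [Module k V]
  [AddCommGroup W] [Module k W] [AddCommGroup N] [Module k N] [AddCommGroup P] [Module k P]

/-- The slice map `v ⊗ n ↦ f v • n` of a functional `f` on the left tensor factor. -/
noncomputable def sliceLeft (N : Type*) [AddCommGroup N] [Module k N] (f : V →ₗ[k] k) :
    V ⊗[k] N →ₗ[k] N :=
  (TensorProduct.lid k N).toLinearMap ∘ₗ f.rTensor N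

/-- The slice map `v ⊗ n ↦ φ n • v` of a functional `φ` on the right tensor factor. -/
noncomputable def sliceRight (V : Type*) [AddCommGroup V] [Module k V] (φ : N →ₗ[k] k) :
    V ⊗[k] N →ₗ[k] V :=
  (TensorProduct.rid k V).toLinearMap ∘ₗ φ.lTensor V

@[simp]
theorem sliceLeft_tmul (f : V →ₗ[k] k) (v : V) (n : N) : sliceLeft N f (v ⊗ₜ n) = f v • n := by
  simp [sliceLeft]

@[simp]
theorem sliceRight_tmul (φ : N →ₗ[k] k) (v : V) (n : N) : sliceRight V φ (v ⊗ₜ n) = φ n • v := by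
  simp [sliceRight]

theorem sliceLeft_lTensor (f : V →ₗ[k] k) (χ : N →ₗ[k] P) (s : V ⊗[k] N) :
    sliceLeft P f (χ.lTensor V s) = χ (sliceLeft N f s) :=
  LinearMap.congr_fun (f := sliceLeft P f ∘ₗ χ.lTensor V) (g := χ ∘ₗ sliceLeft N f)
    (TensorProduct.ext' fun v n => by simp) s

theorem sliceLeft_rTensor (f : W →ₗ[k] k) (h : V →ₗ[k] W) (s : V ⊗[k] N) :
    sliceLeft N f (h.rTensor N s) = sliceLeft N (f ∘ₗ h) s :=
  LinearMap.congr_fun (f := sliceLeft N f ∘ₗ h.rTensor N)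
    (TensorProduct.ext' fun v n => by simp) s

theorem sliceRight_rTensor (φ : N →ₗ[k] k) (h : V →ₗ[k] W) (s : V ⊗[k] N) :
    sliceRight W φ (h.rTensor N s) = h (sliceRight V φ s) :=
  LinearMap.congr_fun (f := sliceRight W φ ∘ₗ h.rTensor N) (g := h ∘ₗ sliceRight V φ)
    (TensorProduct.ext' fun v n => by simp) s

theorem apply_sliceRight (f : V →ₗ[k] k) (φ : N →ₗ[k] k) (s : V ⊗[k] N) :
    f (sliceRight V φ s) = φ (sliceLeft N f s) :=
  LinearMap.congr_fun (f := f ∘ₗ sliceRight V φ) (g := φ ∘ₗ sliceLeft N f)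
    (TensorProduct.ext' fun v n => by simp [mul_comm]) s

theorem tensor_ext_sliceLeft {s t : V ⊗[k] N} (h : ∀ f, sliceLeft N f s = sliceLeft N f t) :
    s = t := by
  classical
  let b := Module.Basis.ofVectorSpace k V
  refine (TensorProduct.equivFinsuppOfBasisLeft b).injective (Finsupp.ext fun i => ?_)
  have slice_coord : ∀ s : V ⊗[k] N,
      TensorProduct.equivFinsuppOfBasisLeft b s i = sliceLeft N (b.coord i) s :=
    LinearMap.congr_fun (f := Finsupp.lapply i ∘ₗ
      (TensorProduct.equivFinsuppOfBasisLeft b).toLinearMap)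
      (TensorProduct.ext' fun v n => by simp [TensorProduct.equivFinsuppOfBasisLeft_apply_tmul])
  rw [slice_coord, slice_coord, h]

theorem tmul_right_injective {v : V} (hv : v ≠ 0) :
    Function.Injective fun n : N => v ⊗ₜ[k] n := fun m n h => by
  obtain ⟨f, hf⟩ := Module.Projective.exists_dual_eq_one k hv
  simpa [hf] using congrArg (sliceLeft N f) h

end Slice

section Comodule

variable {k : Type u} [Field k] {C : Type u} [AddCommGroup C] [Module k C]
  {V W X : Type u} [AddCommGroup V] [Module k V] [AddCommGroup W] [Module k W]
  [AddCommGroup X] [Module k X]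
  {ρV : V →ₗ[k] V ⊗[k] C} {ρW : W →ₗ[k] W ⊗[k] C} {ρX : X →ₗ[k] X ⊗[k] C}

/-- The matrix coefficient map `v ↦ f(v₀) v₁` of a coaction `ρ` at a functional `f`. -/
noncomputable def coeff (ρ : V →ₗ[k] V ⊗[k] C) (f : V →ₗ[k] k) : V →ₗ[k] C :=
  sliceLeft C f ∘ₗ ρ

/-- The action `v ↦ φ(v₁) v₀` of a functional `φ` on `C`, an element of the dual algebra, on a
`C`-comodule. -/
noncomputable def act (ρ : V →ₗ[k] V ⊗[k] C) (φ : C →ₗ[k] k) : V →ₗ[k] V :=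
  sliceRight V φ ∘ₗ ρ

theorem apply_act (ρ : V →ₗ[k] V ⊗[k] C) (f : V →ₗ[k] k) (φ : C →ₗ[k] k) (v : V) :
    f (act ρ φ v) = φ (coeff ρ f v) :=
  apply_sliceRight f φ (ρ v)

theorem sliceLeft_assoc_rTensor (ρ : V →ₗ[k] V ⊗[k] C) (f : V →ₗ[k] k) (s : V ⊗[k] C) :
    sliceLeft (C ⊗[k] C) f (TensorProduct.assoc k V C C (ρ.rTensor C s)) =
      (coeff ρ f).rTensor C s := by
  refine LinearMap.congr_fun (f := sliceLeft (C ⊗[k] C) f ∘ₗ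
    (TensorProduct.assoc k V C C).toLinearMap ∘ₗ ρ.rTensor C) (TensorProduct.ext' fun v c => ?_) s
  have slice_tmul : sliceLeft (C ⊗[k] C) f ∘ₗ (TensorProduct.assoc k V C C).toLinearMap ∘ₗ
      (TensorProduct.mk k (V ⊗[k] C) C).flip c =
      (TensorProduct.mk k C C).flip c ∘ₗ sliceLeft C f :=
    TensorProduct.ext' fun v d => by simp [TensorProduct.smul_tmul']
  simpa [coeff] using LinearMap.congr_fun slice_tmul (ρ v)

theorem isComodHom_iff_coeff {h : V →ₗ[k] W} :
    IsComodHom k C ρV ρW h ↔ ∀ f v, coeff ρW f (h v) = coeff ρV (f ∘ₗ h) v := by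
  constructor
  · intro hh f v
    rw [← LinearMap.comp_apply, coeff, LinearMap.comp_assoc, hh]
    exact sliceLeft_rTensor f h (ρV v)
  · intro hh
    refine LinearMap.ext fun v => tensor_ext_sliceLeft fun f => ?_
    rw [LinearMap.comp_apply, LinearMap.comp_apply, sliceLeft_rTensor]
    exact hh f v

theorem IsComodHom.apply {h : V →ₗ[k] W} (hh : IsComodHom k C ρV ρW h) (v : V) :
    ρW (h v) = h.rTensor C (ρV v) :=
  LinearMap.congr_fun hh v

theorem IsComodHom.comp {h : V →ₗ[k] W} {h' : W →ₗ[k] X} (hh' : IsComodHom k C ρW ρX h')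
    (hh : IsComodHom k C ρV ρW h) : IsComodHom k C ρV ρX (h' ∘ₗ h) := by
  simp only [isComodHom_iff_coeff] at *
  intro f v
  rw [LinearMap.comp_apply, hh', hh, LinearMap.comp_assoc]

theorem IsComodHom.map_act {h : V →ₗ[k] W} (hh : IsComodHom k C ρV ρW h) (φ : C →ₗ[k] k)
    (v : V) : h (act ρV φ v) = act ρW φ (h v) := by
  rw [act, act, LinearMap.comp_apply, LinearMap.comp_apply, hh.apply, sliceRight_rTensor]

variable [Coalgebra k C]

theorem rTensor_coact_eq_iff_coeff {ρ : V →ₗ[k] V ⊗[k] C} {v : V} :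
    ρ.rTensor C (ρ v) = (TensorProduct.assoc k V C C).symm.toLinearMap
        ((Coalgebra.comul (R := k) (A := C)).lTensor V (ρ v)) ↔
      ∀ f, Coalgebra.comul (coeff ρ f v) = (coeff ρ f).rTensor C (ρ v) := by
  rw [LinearEquiv.coe_coe, LinearEquiv.eq_symm_apply]
  constructor
  · intro h f
    rw [← sliceLeft_assoc_rTensor, h, sliceLeft_lTensor]
    rfl
  · intro h
    refine tensor_ext_sliceLeft fun f => ?_
    rw [sliceLeft_assoc_rTensor, ← h, sliceLeft_lTensor]
    rfl

theorem act_counit_eq_iff_coeff {ρ : V →ₗ[k] V ⊗[k] C} {v : V} :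
    act ρ Coalgebra.counit v = v ↔ ∀ f, Coalgebra.counit (R := k) (coeff ρ f v) = f v := by
  simp only [← apply_act]
  rw [← sub_eq_zero, ← Module.forall_dual_apply_eq_zero_iff k]
  simp only [map_sub, sub_eq_zero]

theorem isComod_iff_coeff {ρ : V →ₗ[k] V ⊗[k] C} :
    IsComod k C ρ ↔ (∀ f, IsComodHom k C ρ Coalgebra.comul (coeff ρ f)) ∧
      ∀ f v, Coalgebra.counit (R := k) (coeff ρ f v) = f v where
  mp h := ⟨fun f => LinearMap.ext fun v => rTensor_coact_eq_iff_coeff.1 (h.coassoc v) f,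
    fun f v => act_counit_eq_iff_coeff.1 (h.counit v) f⟩
  mpr h := ⟨fun v => rTensor_coact_eq_iff_coeff.2 fun f => (h.1 f).apply v,
    fun v => act_counit_eq_iff_coeff.2 fun f => h.2 f v⟩

theorem IsComod.isComodHom_coeff (hV : IsComod k C ρV) (f : V →ₗ[k] k) :
    IsComodHom k C ρV Coalgebra.comul (coeff ρV f) :=
  (isComod_iff_coeff.1 hV).1 f

theorem IsComod.comul_coeff (hV : IsComod k C ρV) (f : V →ₗ[k] k) (v : V) :
    Coalgebra.comul (coeff ρV f v) = (coeff ρV f).rTensor C (ρV v) :=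
  (hV.isComodHom_coeff f).apply v

theorem IsComod.counit_coeff (hV : IsComod k C ρV) (f : V →ₗ[k] k) (v : V) :
    Coalgebra.counit (R := k) (coeff ρV f v) = f v :=
  (isComod_iff_coeff.1 hV).2 f v

theorem IsComod.coeff_ne_zero (hV : IsComod k C ρV) {f : V →ₗ[k] k} (hf : f ≠ 0) :
    coeff ρV f ≠ 0 := by
  rintro h
  exact hf (LinearMap.ext fun v => by rw [← hV.counit_coeff, h]; simp)

variable (k C) in
theorem isComod_comul : IsComod k C (Coalgebra.comul (R := k) (A := C)) where
  coassoc c := (Coalgebra.coassoc_symm_apply (R := k) c).symm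
  counit c := by simp

theorem coeff_counit_comp {h : V →ₗ[k] C} (hh : IsComodHom k C ρV Coalgebra.comul h) :
    coeff ρV (Coalgebra.counit ∘ₗ h) = h := by
  refine LinearMap.ext fun v => ?_
  rw [← isComodHom_iff_coeff.1 hh]
  simp [coeff, sliceLeft]

end Comodule

section Subcomodule

variable {k : Type u} [Field k] {C : Type u} [AddCommGroup C] [Module k C]
  {V W : Type u} [AddCommGroup V] [Module k V] [AddCommGroup W] [Module k W]
  {ρV : V →ₗ[k] V ⊗[k] C} {ρW : W →ₗ[k] W ⊗[k] C}

theorem isSubcomod_of_coeff {U : Submodule k V}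
    (h : ∀ u ∈ U, ∀ f : V →ₗ[k] k, (∀ u' ∈ U, f u' = 0) → coeff ρV f u = 0) :
    IsSubcomod k C ρV U := by
  intro u hu
  have exact : Function.Exact (U.subtype.rTensor C) (U.mkQ.rTensor C) :=
    Module.Flat.rTensor_exact C (LinearMap.exact_subtype_mkQ U)
  rw [LinearMap.mem_range, ← Set.mem_range, ← exact]
  refine tensor_ext_sliceLeft fun f => ?_
  rw [sliceLeft_rTensor, map_zero]
  exact h u hu _ fun u' hu' => by simp [(Submodule.Quotient.mk_eq_zero U).2 hu']

theorem IsComodHom.isSubcomod_ker {h : V →ₗ[k] W} (hh : IsComodHom k C ρV ρW h) :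
    IsSubcomod k C ρV (LinearMap.ker h) := by
  intro v hv
  have exact : Function.Exact ((LinearMap.ker h).subtype.rTensor C) (h.rTensor C) :=
    Module.Flat.rTensor_exact C (LinearMap.exact_subtype_ker_map h)
  rw [LinearMap.mem_range, ← Set.mem_range, ← exact, ← hh.apply, LinearMap.mem_ker.1 hv, map_zero]

theorem IsSubcomod.map {U : Submodule k V} (hU : IsSubcomod k C ρV U) {h : V →ₗ[k] W}
    (hh : IsComodHom k C ρV ρW h) : IsSubcomod k C ρW (U.map h) := by
  rintro _ ⟨u, hu, rfl⟩
  obtain ⟨s, hs⟩ := hU u hu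
  refine ⟨(h.restrict fun x hx => Submodule.mem_map_of_mem hx).rTensor C s, ?_⟩
  rw [hh.apply, ← hs, ← LinearMap.comp_apply, ← LinearMap.comp_apply, ← LinearMap.rTensor_comp,
    ← LinearMap.rTensor_comp]
  rfl

theorem IsComodHom.injective_of_ne_zero (hV : IsSimpleComod k C ρV) {h : V →ₗ[k] W}
    (hh : IsComodHom k C ρV ρW h) (h0 : h ≠ 0) : Function.Injective h := by
  obtain hker | hker := hV.2.2 _ le_top hh.isSubcomod_ker
  · exact LinearMap.ker_eq_bot.1 hker
  · exact absurd (LinearMap.ker_eq_top.1 hker) h0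

theorem isSubcomod_top (ρ : V →ₗ[k] V ⊗[k] C) : IsSubcomod k C ρ ⊤ := fun v _ =>
  LinearMap.rTensor_surjective C (fun v => ⟨⟨v, trivial⟩, rfl⟩) (ρ v)

theorem IsComodHom.surjective_of_ne_zero (hW : IsSimpleComod k C ρW) {h : V →ₗ[k] W}
    (hh : IsComodHom k C ρV ρW h) (h0 : h ≠ 0) : Function.Surjective h := by
  have hrange := (isSubcomod_top ρV).map hh
  rw [Submodule.map_top] at hrange
  obtain hbot | htop := hW.2.2 _ le_top hrange
  · exact absurd (LinearMap.range_eq_bot.1 hbot) h0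
  · exact LinearMap.range_eq_top.1 htop

theorem IsSimpleComod.exists_ne_zero (hV : IsSimpleComod k C ρV) : ∃ v : V, v ≠ 0 :=
  (Submodule.exists_mem_ne_zero_of_ne_bot hV.2.1).imp fun _ h => h.2

theorem IsSimpleComod.exists_dual_eq_one (hV : IsSimpleComod k C ρV) :
    ∃ (f : V →ₗ[k] k) (v : V), f v = 1 := by
  obtain ⟨v, hv⟩ := hV.exists_ne_zero
  obtain ⟨f, hf⟩ := Module.Projective.exists_dual_eq_one k hv
  exact ⟨f, v, hf⟩

/-- The coaction induced on a subcomodule. -/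
noncomputable def IsSubcomod.coact {U : Submodule k V} (hU : IsSubcomod k C ρV U) :
    U →ₗ[k] U ⊗[k] C :=
  (LinearEquiv.ofInjective (U.subtype.rTensor C)
    (Module.Flat.rTensor_preserves_injective_linearMap _ U.injective_subtype)).symm.toLinearMap ∘ₗ
    (ρV ∘ₗ U.subtype).codRestrict _ fun u => hU u u.2

theorem IsSubcomod.isComodHom_subtype {U : Submodule k V} (hU : IsSubcomod k C ρV U) :
    IsComodHom k C hU.coact ρV U.subtype := by
  refine LinearMap.ext fun u => ?_
  have hinj := Module.Flat.rTensor_preserves_injective_linearMap (M := C) _ U.injective_subtype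
  exact congrArg Subtype.val ((LinearEquiv.ofInjective _ hinj).apply_symm_apply
    ⟨ρV u, hU u u.2⟩).symm

theorem IsSimpleSubcomod.isSimpleComod_coact {U : Submodule k V}
    (hU : IsSimpleSubcomod k C ρV U) : IsSimpleComod k C hU.1.coact := by
  refine ⟨isSubcomod_top _, fun htop => hU.2.1 ?_, fun U' _ hU' => ?_⟩
  · rw [← U.range_subtype, ← Submodule.map_top, htop, Submodule.map_bot]
  · have hmap := hU'.map hU.1.isComodHom_subtype
    refine (hU.2.2 _ (Submodule.map_subtype_le U U') hmap).imp (fun h => ?_) fun h => ?_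
    · exact Submodule.map_injective_of_injective U.injective_subtype
        (h.trans (Submodule.map_bot _).symm)
    · exact Submodule.map_injective_of_injective U.injective_subtype
        (h.trans U.map_subtype_top.symm)

theorem IsComod.of_injective [Coalgebra k C] {i : V →ₗ[k] W} (hi : IsComodHom k C ρV ρW i)
    (hinj : Function.Injective i) (hW : IsComod k C ρW) : IsComod k C ρV := by
  have coeff_eq (f : V →ₗ[k] k) : ∃ g : W →ₗ[k] k, f = g ∘ₗ i ∧ coeff ρV f = coeff ρW g ∘ₗ i := by
    obtain ⟨g, rfl⟩ := LinearMap.dualMap_surjective_of_injective hinj f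
    exact ⟨g, rfl, LinearMap.ext fun v => (isComodHom_iff_coeff.1 hi g v).symm⟩
  refine isComod_iff_coeff.2 ⟨fun f => ?_, fun f v => ?_⟩
  · obtain ⟨g, -, hg⟩ := coeff_eq f
    exact hg ▸ (hW.isComodHom_coeff g).comp hi
  · obtain ⟨g, rfl, hg⟩ := coeff_eq f
    rw [hg]
    exact hW.counit_coeff g (i v)

theorem isComodHom_component_of_lof {ι : Type u} [DecidableEq ι] {U : ι → Type u}
    [∀ i, AddCommGroup (U i)] [∀ i, Module k (U i)] {ρU : ∀ i, U i →ₗ[k] U i ⊗[k] C}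
    (e : DirectSum ι U ≃ₗ[k] V)
    (incl : ∀ i, IsComodHom k C (ρU i) ρV (e.toLinearMap ∘ₗ DirectSum.lof k ι U i)) (i : ι) :
    IsComodHom k C ρV (ρU i) (DirectSum.component k ι U i ∘ₗ e.symm.toLinearMap) := by
  rw [IsComodHom, ← LinearMap.cancel_right e.surjective]
  refine DirectSum.linearMap_ext k fun j => LinearMap.ext fun x => ?_
  have component_comp_incl : (DirectSum.component k ι U i ∘ₗ e.symm.toLinearMap) ∘ₗ
      e.toLinearMap ∘ₗ DirectSum.lof k ι U j =
      DirectSum.component k ι U i ∘ₗ DirectSum.lof k ι U j :=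
    LinearMap.ext fun y => by simp
  have hj := (incl j).apply x
  simp only [LinearMap.comp_apply, LinearEquiv.coe_coe, LinearEquiv.symm_apply_apply] at hj ⊢
  rw [hj, ← LinearMap.comp_apply (LinearMap.rTensor C _), ← LinearMap.rTensor_comp,
    component_comp_incl, ← LinearMap.comp_apply (DirectSum.component k ι U i)]
  obtain rfl | hij := eq_or_ne j i
  · simp
  · simp [DirectSum.component_comp_lof, hij]

end Subcomodule

section Simple

variable {k : Type u} [Field k] {C : Type u} [AddCommGroup C] [Module k C] [Coalgebra k C]
  {V : Type u} [AddCommGroup V] [Module k V] {ρV : V →ₗ[k] V ⊗[k] C}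

/-- A simple subcomodule as a bundled simple comodule. -/
noncomputable def SimpleComodule.ofSubcomod (hV : IsComod k C ρV) {U : Submodule k V}
    (hU : IsSimpleSubcomod k C ρV U) : SimpleComodule k C where
  V := U
  ρ := hU.1.coact
  isComod := .of_injective hU.1.isComodHom_subtype U.injective_subtype hV
  isSimple := hU.isSimpleComod_coact

theorem SimpleComodule.exists_equiv_of_hom {X Y : SimpleComodule k C} {h : X.V →ₗ[k] Y.V}
    (hh : IsComodHom k C X.ρ Y.ρ h) (h0 : h ≠ 0) : ∃ e : X.V ≃ₗ[k] Y.V, e.toLinearMap = h :=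
  ⟨.ofBijective h ⟨hh.injective_of_ne_zero X.isSimple h0, hh.surjective_of_ne_zero Y.isSimple h0⟩,
    rfl⟩

theorem SimpleComodule.cls_eq_of_hom {X Y : SimpleComodule k C} {h : X.V →ₗ[k] Y.V}
    (hh : IsComodHom k C X.ρ Y.ρ h) (h0 : h ≠ 0) : X.cls = Y.cls := by
  obtain ⟨e, rfl⟩ := exists_equiv_of_hom hh h0
  exact Quot.sound ⟨e, hh⟩

theorem SimpleComodule.cls_surjective :
    Function.Surjective (SimpleComodule.cls k C : SimpleComodule k C → SimpleComodQuot k C) :=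
  Quot.exists_rep

open scoped Classical in
theorem IsCosemisimple.exists_directSum (hC : IsCosemisimple k C) (hV : IsComod k C ρV) :
    ∃ (ι : Type u) (X : ι → SimpleComodule k C) (e : (DirectSum ι fun i => (X i).V) ≃ₗ[k] V),
      (∀ i, IsComodHom k C (X i).ρ ρV (e.toLinearMap ∘ₗ DirectSum.lof k ι (fun i => (X i).V) i)) ∧
      ∀ i, IsComodHom k C ρV (X i).ρ
        (DirectSum.component k ι (fun i => (X i).V) i ∘ₗ e.symm.toLinearMap) := by
  obtain ⟨ι, U, hU, hind, hsup⟩ := hC V ρV hV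
  let X i := SimpleComodule.ofSubcomod hV (hU i)
  let e : (DirectSum ι fun i => (X i).V) ≃ₗ[k] V := .ofBijective (DirectSum.coeLinearMap U)
    (DirectSum.isInternal_submodule_of_iSupIndep_of_iSup_eq_top hind hsup)
  have incl i : IsComodHom k C (X i).ρ ρV
      (e.toLinearMap ∘ₗ DirectSum.lof k ι (fun i => (X i).V) i) := by
    have incl_eq : e.toLinearMap ∘ₗ DirectSum.lof k ι (fun i => (X i).V) i = (U i).subtype :=
      LinearMap.ext fun u => DirectSum.coeLinearMap_lof U i u
    exact incl_eq ▸ (hU i).1.isComodHom_subtype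
  exact ⟨ι, X, e, incl, fun i => isComodHom_component_of_lof e incl i⟩

end Simple

section Cosemisimple

variable {k : Type u} [Field k] {C : Type u} [AddCommGroup C] [Module k C]
  {V W : Type u} [AddCommGroup V] [Module k V] [AddCommGroup W] [Module k W]
  {ρV : V →ₗ[k] V ⊗[k] C} {ρW : W →ₗ[k] W ⊗[k] C}

theorem IsComodHom.symm {e : V ≃ₗ[k] W} (he : IsComodHom k C ρV ρW e.toLinearMap) :
    IsComodHom k C ρW ρV e.symm.toLinearMap := by
  refine isComodHom_iff_coeff.2 fun f w => ?_
  have := isComodHom_iff_coeff.1 he (f ∘ₗ e.symm.toLinearMap) (e.symm w)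
  simpa [LinearMap.comp_assoc] using this.symm

theorem exists_component_comp_ne_zero {ι : Type u} {U : ι → Type u} [∀ i, AddCommGroup (U i)]
    [∀ i, Module k (U i)] (e : W ≃ₗ[k] DirectSum ι U) {h : V →ₗ[k] W} (h0 : h ≠ 0) :
    ∃ i, (DirectSum.component k ι U i ∘ₗ e.toLinearMap) ∘ₗ h ≠ 0 := by
  contrapose! h0
  refine LinearMap.ext fun v => e.injective (DirectSum.ext_component k fun i => ?_)
  simpa using LinearMap.congr_fun (h0 i) v

variable [Coalgebra k C]

theorem IsCosemisimple.hom_ext_simple (hC : IsCosemisimple k C) (hV : IsComod k C ρV)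
    {N : Type*} [AddCommGroup N] [Module k N] {h h' : V →ₗ[k] N}
    (H : ∀ (X : SimpleComodule k C) (i : X.V →ₗ[k] V), IsComodHom k C X.ρ ρV i →
      h ∘ₗ i = h' ∘ₗ i) : h = h' := by
  classical
  obtain ⟨ι, X, e, incl, -⟩ := hC.exists_directSum hV
  rw [← LinearMap.cancel_right e.surjective]
  exact DirectSum.linearMap_ext k fun i => H (X i) _ (incl i)

theorem IsCosemisimple.hom_ext_coeff (hC : IsCosemisimple k C) {N : Type*} [AddCommGroup N]
    [Module k N] {h h' : C →ₗ[k] N}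
    (H : ∀ (X : SimpleComodule k C) (f : X.V →ₗ[k] k) (v : X.V),
      h (coeff X.ρ f v) = h' (coeff X.ρ f v)) : h = h' :=
  hC.hom_ext_simple (isComod_comul k C) fun X i hi => by
    rw [← coeff_counit_comp hi]
    exact LinearMap.ext (H X _)

theorem IsCosemisimple.exists_simple_comp_ne_zero (hC : IsCosemisimple k C) (hV : IsComod k C ρV)
    {N : Type*} [AddCommGroup N] [Module k N] {h : V →ₗ[k] N} (h0 : h ≠ 0) :
    ∃ (X : SimpleComodule k C) (i : X.V →ₗ[k] V), IsComodHom k C X.ρ ρV i ∧ h ∘ₗ i ≠ 0 := by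
  contrapose! h0
  exact hC.hom_ext_simple hV fun X i hi => (h0 X i hi).trans (LinearMap.zero_comp i).symm

theorem IsCosemisimple.isConstituent_of_hom (hC : IsCosemisimple k C) (hV : IsComod k C ρV)
    {X : SimpleComodule k C} {h : V →ₗ[k] X.V} (hh : IsComodHom k C ρV X.ρ h) (h0 : h ≠ 0) :
    IsConstituent k C X.ρ ρV := by
  obtain ⟨Y, i, hi, hi0⟩ := hC.exists_simple_comp_ne_zero hV h0
  obtain ⟨e, he⟩ := SimpleComodule.exists_equiv_of_hom (hh.comp hi) hi0
  refine ⟨i ∘ₗ e.symm.toLinearMap, fun ie0 => hi0 ?_, hi.comp (.symm (he ▸ hh.comp hi))⟩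
  have i0 : i = 0 := (LinearMap.cancel_right e.symm.surjective).1 ie0
  rw [i0, LinearMap.comp_zero]

theorem IsCosemisimple.exists_hom_of_isConstituent (hC : IsCosemisimple k C)
    (hV : IsComod k C ρV) (X : SimpleComodule k C) (hX : IsConstituent k C X.ρ ρV) :
    ∃ h : V →ₗ[k] X.V, h ≠ 0 ∧ IsComodHom k C ρV X.ρ h := by
  classical
  obtain ⟨ι, Y, e, -, proj⟩ := hC.exists_directSum hV
  obtain ⟨f, f0, hf⟩ := hX
  obtain ⟨i, hi⟩ := exists_component_comp_ne_zero e.symm f0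
  obtain ⟨e', he'⟩ := SimpleComodule.exists_equiv_of_hom ((proj i).comp hf) hi
  refine ⟨e'.symm.toLinearMap ∘ₗ DirectSum.component k ι (fun i => (Y i).V) i ∘ₗ
    e.symm.toLinearMap, fun h0 => ?_, (IsComodHom.symm (he' ▸ (proj i).comp hf)).comp (proj i)⟩
  obtain ⟨x, hx⟩ := X.isSimple.exists_ne_zero
  refine hx ?_
  rw [← e'.symm_apply_apply x, ← LinearEquiv.coe_coe e', he']
  exact LinearMap.congr_fun h0 (f x)

theorem SimpleComodule.exists_hom_comul (X : SimpleComodule k C) :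
    ∃ h : X.V →ₗ[k] C, h ≠ 0 ∧ IsComodHom k C X.ρ Coalgebra.comul h := by
  obtain ⟨f, v, hf⟩ := X.isSimple.exists_dual_eq_one
  have f0 : f ≠ 0 := by
    rintro rfl
    simp at hf
  exact ⟨coeff X.ρ f, X.isComod.coeff_ne_zero f0, X.isComod.isComodHom_coeff f⟩

theorem IsCosemisimple.small_simpleComodQuot (hC : IsCosemisimple k C) :
    Small.{u} (SimpleComodQuot k C) := by
  classical
  obtain ⟨ι, X, e, -, proj⟩ := hC.exists_directSum (isComod_comul k C)
  refine small_of_surjective (f := fun i => (X i).cls) ?_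
  rintro ⟨Y⟩
  obtain ⟨h, h0, hh⟩ := Y.exists_hom_comul
  obtain ⟨i, hi⟩ := exists_component_comp_ne_zero e.symm h0
  exact ⟨i, (SimpleComodule.cls_eq_of_hom ((proj i).comp hh) hi).symm⟩

theorem IsCosemisimple.exists_apply_coeff (hC : IsCosemisimple k C) {N : Type*} [AddCommGroup N]
    [Module k N] (γ : SimpleComodQuot k C → N) :
    ∃ χ : C →ₗ[k] N, ∀ (X : SimpleComodule k C) (f : X.V →ₗ[k] k) (v : X.V),
      χ (coeff X.ρ f v) = f v • γ X.cls := by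
  classical
  obtain ⟨ι, X, e, -, proj⟩ := hC.exists_directSum (isComod_comul k C)
  let incl i := e.toLinearMap ∘ₗ DirectSum.lof k ι (fun i => (X i).V) i
  refine ⟨DirectSum.toModule k ι N (fun i =>
    (Coalgebra.counit ∘ₗ incl i).smulRight (γ (X i).cls)) ∘ₗ e.symm.toLinearMap, fun Y f v => ?_⟩
  let z := e.symm (coeff Y.ρ f v)
  have hz : z = ∑ i ∈ z.support, DirectSum.lof k ι (fun i => (X i).V) i (z i) :=
    (DirectSum.sum_support_of z).symm
  have cls_eq {i : ι} (hi : i ∈ z.support) : Y.cls = (X i).cls := by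
    refine SimpleComodule.cls_eq_of_hom ((proj i).comp (Y.isComod.isComodHom_coeff f)) fun h0 => ?_
    exact DFinsupp.mem_support_iff.1 hi (LinearMap.congr_fun h0 v)
  have counit_eq : f v = ∑ i ∈ z.support, Coalgebra.counit (R := k) (incl i (z i)) := by
    rw [← map_sum, ← Y.isComod.counit_coeff f v, ← e.apply_symm_apply (coeff Y.ρ f v)]
    simp only [incl, LinearMap.comp_apply, LinearEquiv.coe_coe]
    rw [← map_sum, ← hz]
  change DirectSum.toModule k ι N _ z = _
  rw [counit_eq, Finset.sum_smul, hz, map_sum, ← hz]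
  refine Finset.sum_congr rfl fun i hi => ?_
  rw [cls_eq hi, DirectSum.toModule_lof, LinearMap.smulRight_apply, LinearMap.comp_apply]

end Cosemisimple

section Character

variable {k : Type u} [Field k] {C N P : Type u} [AddCommGroup C] [Module k C]
  [AddCommGroup N] [Module k N] [AddCommGroup P] [Module k P]
  {V W : Type u} [AddCommGroup V] [Module k V] [AddCommGroup W] [Module k W]
  {ρV : V →ₗ[k] V ⊗[k] C} {ρW : W →ₗ[k] W ⊗[k] C} {χ : C →ₗ[k] N} {g g' : N}

variable (k C) in
/-- A comodule has character `g` with respect to `χ : C → N` if its corestriction along `χ` is a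
sum of copies of `g`. This extends `HasCentralChar` from simple comodules to all comodules. -/
def HasChar (χ : C →ₗ[k] N) (ρ : V →ₗ[k] V ⊗[k] C) (g : N) : Prop :=
  ∀ v, cores k C χ ρ v = v ⊗ₜ[k] g

theorem coeff_cores (χ : C →ₗ[k] N) (ρ : V →ₗ[k] V ⊗[k] C) (f : V →ₗ[k] k) :
    sliceLeft N f ∘ₗ cores k C χ ρ = χ ∘ₗ coeff ρ f :=
  LinearMap.ext fun v => sliceLeft_lTensor f χ (ρ v)

theorem hasChar_iff_coeff :
    HasChar k C χ ρV g ↔ ∀ f v, χ (coeff ρV f v) = f v • g := by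
  simp only [← LinearMap.comp_apply χ, ← coeff_cores]
  refine ⟨fun h f v => ?_, fun h v => tensor_ext_sliceLeft fun f => ?_⟩
  · rw [LinearMap.comp_apply, h v, sliceLeft_tmul]
  · rw [← LinearMap.comp_apply, h f v, sliceLeft_tmul]

theorem HasChar.comp (hV : HasChar k C χ ρV g) (τ : N →ₗ[k] P) :
    HasChar k C (τ ∘ₗ χ) ρV (τ g) := by
  rw [hasChar_iff_coeff] at *
  intro f v
  rw [LinearMap.comp_apply, hV, map_smul]

theorem hasChar_cores {τ : N →ₗ[k] P} {p : P} :
    HasChar k N τ (cores k C χ ρV) p ↔ HasChar k C (τ ∘ₗ χ) ρV p := by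
  rw [hasChar_iff_coeff, hasChar_iff_coeff]
  exact forall₂_congr fun f v => by rw [coeff, coeff_cores]; rfl

theorem IsComodHom.cores {h : V →ₗ[k] W} (hh : IsComodHom k C ρV ρW h) (χ : C →ₗ[k] N) :
    IsComodHom k N (cores k C χ ρV) (cores k C χ ρW) h := by
  rw [IsComodHom] at hh ⊢
  rw [QG.cores, QG.cores, LinearMap.comp_assoc, hh, ← LinearMap.comp_assoc,
    ← LinearMap.comp_assoc, LinearMap.lTensor_comp_rTensor, LinearMap.rTensor_comp_lTensor]

theorem HasChar.eq_of_hom (hV : HasChar k C χ ρV g) (hW : HasChar k C χ ρW g')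
    {h : V →ₗ[k] W} (hh : IsComodHom k C ρV ρW h) (h0 : h ≠ 0) : g = g' := by
  obtain ⟨v, hv⟩ := DFunLike.ne_iff.1 h0
  refine tmul_right_injective (k := k) hv ?_
  change h v ⊗ₜ[k] g = h v ⊗ₜ[k] g'
  rw [← hW (h v), (hh.cores χ).apply, hV v, LinearMap.rTensor_tmul]

theorem HasChar.eq_of_isSimpleComod (hs : IsSimpleComod k C ρV) (h : HasChar k C χ ρV g)
    (h' : HasChar k C χ ρV g') : g = g' := by
  obtain ⟨v, hv⟩ := hs.exists_ne_zero
  exact tmul_right_injective (k := k) hv ((h v).symm.trans (h' v))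

variable [Coalgebra k C]

theorem isComodHom_cores_comul [Coalgebra k N] {F : Type*} [FunLike F C N] [CoalgHomClass F k C N]
    (φ : F) : IsComodHom k N (QG.cores k C (φ : C →ₗ[k] N) Coalgebra.comul) Coalgebra.comul
      (φ : C →ₗ[k] N) := by
  rw [IsComodHom, QG.cores, ← LinearMap.comp_assoc, LinearMap.rTensor_comp_lTensor]
  exact (CoalgHomClass.map_comp_comul φ).symm

theorem IsComod.cores [Coalgebra k N] {F : Type*} [FunLike F C N] [CoalgHomClass F k C N]
    (hV : IsComod k C ρV) (φ : F) : IsComod k N (cores k C (φ : C →ₗ[k] N) ρV) := by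
  refine isComod_iff_coeff.2 ⟨fun f => ?_, fun f v => ?_⟩ <;> rw [coeff, coeff_cores]
  · exact (isComodHom_cores_comul φ).comp ((hV.isComodHom_coeff f).cores (φ : C →ₗ[k] N))
  · exact (CoalgHomClass.counit_comp_apply φ _).trans (hV.counit_coeff f v)

theorem exists_isConstituent_cores [Coalgebra k N] (hC : IsCosemisimple k C)
    (hN : IsCosemisimple k N) {F : Type*} [FunLike F C N] [CoalgHomClass F k C N] {φ : F}
    (hφ : Function.Surjective φ) (T : SimpleComodule k N) :
    ∃ X : SimpleComodule k C, IsConstituent k N T.ρ (cores k C (φ : C →ₗ[k] N) X.ρ) := by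
  obtain ⟨p, p0, hp⟩ := hN.exists_hom_of_isConstituent (isComod_comul k N) T T.exists_hom_comul
  have pφ0 : p ∘ₗ (φ : C →ₗ[k] N) ≠ 0 := fun h => p0 ((LinearMap.cancel_right hφ).1 h)
  obtain ⟨X, i, hi, hi0⟩ := hC.exists_simple_comp_ne_zero (isComod_comul k C) pφ0
  exact ⟨X, hN.isConstituent_of_hom (X.isComod.cores φ)
    ((hp.comp (isComodHom_cores_comul φ)).comp (hi.cores (φ : C →ₗ[k] N))) hi0⟩

theorem HasChar.of_simple (hC : IsCosemisimple k C) (hV : IsComod k C ρV)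
    (h : ∀ X : SimpleComodule k C, IsConstituent k C X.ρ ρV → HasChar k C χ X.ρ g) :
    HasChar k C χ ρV g := by
  suffices h' : cores k C χ ρV = (TensorProduct.mk k V N).flip g from LinearMap.congr_fun h'
  refine hC.hom_ext_simple hV fun X i hi => LinearMap.ext fun x => ?_
  obtain rfl | i0 := eq_or_ne i 0
  · simp
  · simpa [h X ⟨i, i0, hi⟩ x] using (hi.cores χ).apply x

theorem exists_char_cls (h : ∀ X : SimpleComodule k C, ∃ g : N, HasChar k C χ X.ρ g) :
    ∃ γ : SimpleComodQuot k C → N, ∀ X : SimpleComodule k C, HasChar k C χ X.ρ (γ X.cls) := by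
  choose γ hγ using h
  refine ⟨Quot.lift γ fun X Y ⟨e, he⟩ => (hγ X).eq_of_hom (hγ Y) he ?_, hγ⟩
  obtain ⟨x, hx⟩ := X.isSimple.exists_ne_zero
  exact fun h0 => hx (e.map_eq_zero_iff.1 (LinearMap.congr_fun h0 x))

theorem HasChar.lTensor_comul_coeff (h : HasChar k C χ ρV g) (hV : IsComod k C ρV)
    (f : V →ₗ[k] k) (v : V) :
    χ.lTensor C (Coalgebra.comul (coeff ρV f v)) = coeff ρV f v ⊗ₜ g := by
  rw [hV.comul_coeff, ← LinearMap.comp_apply, LinearMap.lTensor_comp_rTensor,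
    ← LinearMap.rTensor_comp_lTensor, LinearMap.comp_apply]
  change (coeff ρV f).rTensor N (cores k C χ ρV v) = _
  rw [h v, LinearMap.rTensor_tmul]

theorem HasChar.rTensor_comul_coeff (h : HasChar k C χ ρV g) (hV : IsComod k C ρV)
    (f : V →ₗ[k] k) (v : V) :
    χ.rTensor C (Coalgebra.comul (coeff ρV f v)) = g ⊗ₜ coeff ρV f v := by
  have hχ : χ ∘ₗ coeff ρV f = f.smulRight g := LinearMap.ext (hasChar_iff_coeff.1 h f)
  rw [hV.comul_coeff, ← LinearMap.comp_apply, ← LinearMap.rTensor_comp, hχ]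
  exact LinearMap.congr_fun (f := (f.smulRight g).rTensor C)
    (g := TensorProduct.mk k N C g ∘ₗ sliceLeft C f)
    (TensorProduct.ext' fun v c => by simp [TensorProduct.smul_tmul]) (ρV v)

theorem isCentralMap_of_hasChar (hC : IsCosemisimple k C)
    (h : ∀ X : SimpleComodule k C, ∃ g : N, HasChar k C χ X.ρ g) : IsCentralMap k C χ := by
  refine hC.hom_ext_coeff fun X f v => ?_
  obtain ⟨g, hg⟩ := h X
  simp only [LinearMap.comp_apply, LinearEquiv.coe_coe]
  rw [hg.rTensor_comul_coeff X.isComod, LinearMap.rTensor_comm,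
    hg.lTensor_comul_coeff X.isComod, TensorProduct.comm_tmul]

theorem HasChar.isGroupLikeElem [Coalgebra k N] {F : Type*} [FunLike F C N]
    [CoalgHomClass F k C N] {φ : F} (hV : IsComod k C ρV) (hs : IsSimpleComod k C ρV)
    (h : HasChar k C (φ : C →ₗ[k] N) ρV g) : IsGroupLikeElem k g := by
  obtain ⟨f, v, hf⟩ := hs.exists_dual_eq_one
  have apply_coeff : φ (coeff ρV f v) = g := by simpa [hf] using hasChar_iff_coeff.1 h f v
  constructor
  · rw [← apply_coeff, CoalgHomClass.counit_comp_apply, hV.counit_coeff, hf]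
  · nth_rw 1 [← apply_coeff]
    rw [← CoalgHomClass.map_comp_comul_apply]
    have := congrArg ((φ : C →ₗ[k] N).rTensor N) (h.lTensor_comul_coeff hV f v)
    rw [← LinearMap.comp_apply, LinearMap.rTensor_comp_lTensor, LinearMap.rTensor_tmul] at this
    rw [← apply_coeff] at this ⊢
    exact this

end Character

section Central

variable {k : Type u} [Field k] {C N : Type u} [AddCommGroup C] [Module k C]
  [AddCommGroup N] [Module k N]
  {V : Type u} [AddCommGroup V] [Module k V] {ρV : V →ₗ[k] V ⊗[k] C} {ζ : C →ₗ[k] N}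

/-- The orbit map `φ ↦ φ(v₁) v₀` of a vector under the dual algebra of `C`. -/
noncomputable def actAt (ρ : V →ₗ[k] V ⊗[k] C) (v : V) : (C →ₗ[k] k) →ₗ[k] V :=
  (LinearMap.applyₗ (ρ v)) ∘ₗ LinearMap.llcomp k _ _ _ (TensorProduct.rid k V).toLinearMap ∘ₗ
    LinearMap.lTensorHom V

theorem actAt_apply (ρ : V →ₗ[k] V ⊗[k] C) (φ : C →ₗ[k] k) (v : V) :
    actAt ρ v φ = act ρ φ v :=
  rfl

theorem finite_range_actAt (ρ : V →ₗ[k] V ⊗[k] C) (v : V) :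
    Module.Finite k (LinearMap.range (actAt ρ v)) := by
  classical
  obtain ⟨S, hS⟩ := TensorProduct.exists_finset (ρ v)
  have range_le : LinearMap.range (actAt ρ v) ≤ Submodule.span k (S.image Prod.fst) := by
    rintro _ ⟨φ, rfl⟩
    rw [actAt_apply, act, LinearMap.comp_apply, hS, map_sum]
    refine Submodule.sum_mem _ fun s hs => ?_
    rw [sliceRight_tmul]
    exact Submodule.smul_mem _ _ (Submodule.subset_span (Finset.mem_image_of_mem _ hs))
  exact Submodule.finiteDimensional_of_le range_le

theorem IsComodHom.sub_smul_id {h : V →ₗ[k] V} (hh : IsComodHom k C ρV ρV h) (a : k) :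
    IsComodHom k C ρV ρV (h - a • LinearMap.id) := by
  rw [IsComodHom, LinearMap.comp_sub, LinearMap.rTensor_sub, LinearMap.sub_comp, hh,
    LinearMap.comp_smul, LinearMap.rTensor_smul, LinearMap.smul_comp, LinearMap.rTensor_id]
  rfl

variable [Coalgebra k C]

theorem IsComod.coeff_act (hV : IsComod k C ρV) (f : V →ₗ[k] k) (φ : C →ₗ[k] k) (v : V) :
    coeff ρV f (act ρV φ v) = act Coalgebra.comul φ (coeff ρV f v) :=
  (hV.isComodHom_coeff f).map_act φ v

theorem IsComod.coeff_comp_act (hV : IsComod k C ρV) (f : V →ₗ[k] k) (φ : C →ₗ[k] k) (v : V) :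
    coeff ρV (f ∘ₗ act ρV φ) v = coeff Coalgebra.comul φ (coeff ρV f v) := by
  rw [isComodHom_iff_coeff.1 (hV.isComodHom_coeff f)]
  exact congrArg (coeff ρV · v) (LinearMap.ext fun v => apply_act ρV f φ v)

theorem IsCentralMap.act_comul (hζ : IsCentralMap k C ζ) (ψ : N →ₗ[k] k) :
    act Coalgebra.comul (ψ ∘ₗ ζ) = coeff Coalgebra.comul (ψ ∘ₗ ζ) := by
  refine LinearMap.ext fun c => ?_
  have slice_right (s : C ⊗[k] C) : sliceRight C (ψ ∘ₗ ζ) s =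
      sliceLeft C ψ (ζ.rTensor C (TensorProduct.comm k C C s)) :=
    LinearMap.congr_fun (f := sliceRight C (ψ ∘ₗ ζ))
      (g := sliceLeft C ψ ∘ₗ ζ.rTensor C ∘ₗ (TensorProduct.comm k C C).toLinearMap)
      (TensorProduct.ext' fun c d => by simp) s
  have central : ζ.rTensor C (Coalgebra.comul c) =
      ζ.rTensor C (TensorProduct.comm k C C (Coalgebra.comul c)) := LinearMap.congr_fun hζ c
  rw [act, coeff, LinearMap.comp_apply, LinearMap.comp_apply, slice_right, ← central,
    sliceLeft_rTensor]

theorem IsCentralMap.isComodHom_act (hζ : IsCentralMap k C ζ) (hV : IsComod k C ρV)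
    (ψ : N →ₗ[k] k) : IsComodHom k C ρV ρV (act ρV (ψ ∘ₗ ζ)) :=
  isComodHom_iff_coeff.2 fun f v => by rw [hV.coeff_act, hV.coeff_comp_act, hζ.act_comul]

theorem IsComod.isSubcomod_range_actAt (hV : IsComod k C ρV) (v : V) :
    IsSubcomod k C ρV (LinearMap.range (actAt ρV v)) := by
  refine isSubcomod_of_coeff ?_
  rintro _ ⟨φ, rfl⟩ f hf
  have coeff_zero : coeff ρV f v = 0 := (Module.forall_dual_apply_eq_zero_iff k _).1 fun φ => by
    rw [← apply_act]
    exact hf _ ⟨φ, rfl⟩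
  rw [actAt_apply, hV.coeff_act, coeff_zero, map_zero]

theorem SimpleComodule.finite (X : SimpleComodule k C) : Module.Finite k X.V := by
  obtain ⟨v, hv⟩ := X.isSimple.exists_ne_zero
  have mem : v ∈ LinearMap.range (actAt X.ρ v) := ⟨Coalgebra.counit, X.isComod.counit v⟩
  obtain hbot | htop := X.isSimple.2.2 _ le_top (X.isComod.isSubcomod_range_actAt v)
  · exact absurd (by simpa [hbot] using mem) hv
  · have := finite_range_actAt X.ρ v
    rw [htop] at this
    exact Module.Finite.equiv Submodule.topEquiv

theorem SimpleComodule.exists_eq_smul_id [IsAlgClosed k] (X : SimpleComodule k C)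
    {h : X.V →ₗ[k] X.V} (hh : IsComodHom k C X.ρ X.ρ h) : ∃ a : k, h = a • LinearMap.id := by
  have := X.finite
  obtain ⟨v, hv⟩ := X.isSimple.exists_ne_zero
  have : Nontrivial X.V := ⟨v, 0, hv⟩
  obtain ⟨a, ha⟩ := Module.End.exists_eigenvalue h
  obtain ⟨w, hw⟩ := ha.exists_hasEigenvector
  refine ⟨a, sub_eq_zero.1 (by_contra fun h0 => hw.2 ?_)⟩
  refine (hh.sub_smul_id a).injective_of_ne_zero X.isSimple h0 ?_
  simp [hw.apply_eq_smul]

theorem IsCentralMap.exists_hasChar [IsAlgClosed k] (hζ : IsCentralMap k C ζ)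
    (X : SimpleComodule k C) : ∃ g : N, HasChar k C ζ X.ρ g := by
  obtain ⟨f₀, v₀, h₀⟩ := X.isSimple.exists_dual_eq_one
  refine ⟨ζ (coeff X.ρ f₀ v₀), hasChar_iff_coeff.2 fun f v => ?_⟩
  rw [← sub_eq_zero, ← Module.forall_dual_apply_eq_zero_iff k]
  intro ψ
  obtain ⟨a, ha⟩ := X.exists_eq_smul_id (hζ.isComodHom_act X.isComod ψ)
  have apply_coeff (f : X.V →ₗ[k] k) (v : X.V) : ψ (ζ (coeff X.ρ f v)) = a * f v := by
    rw [← LinearMap.comp_apply ψ, ← apply_act, ha, LinearMap.smul_apply, LinearMap.id_apply,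
      map_smul, smul_eq_mul]
  rw [map_sub, map_smul, apply_coeff, apply_coeff, h₀, smul_eq_mul, mul_one, mul_comm, sub_self]

end Central

section TensorMul

variable {k : Type*} [Field k] {A B : Type*} [Ring A] [Algebra k A] [Ring B] [Algebra k B]
  {V W V' W' N : Type*} [AddCommGroup V] [Module k V] [AddCommGroup W] [Module k W]
  [AddCommGroup V'] [Module k V'] [AddCommGroup W'] [Module k W'] [AddCommGroup N] [Module k N]
  {F : Type*} [FunLike F A B] [AlgHomClass F k A B]

theorem tensor_ext_sliceLeft_dualDistrib {s t : (V ⊗[k] W) ⊗[k] N}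
    (h : ∀ f f', sliceLeft N (TensorProduct.dualDistrib k V W (f ⊗ₜ f')) s =
      sliceLeft N (TensorProduct.dualDistrib k V W (f ⊗ₜ f')) t) : s = t := by
  have slice_assoc (f : V →ₗ[k] k) (f' : W →ₗ[k] k) :
      sliceLeft N f' ∘ₗ sliceLeft (W ⊗[k] N) f ∘ₗ (TensorProduct.assoc k V W N).toLinearMap =
        sliceLeft N (TensorProduct.dualDistrib k V W (f ⊗ₜ f')) :=
    TensorProduct.ext_threefold fun v w n => by simp [mul_smul]
  refine (TensorProduct.assoc k V W N).injective (tensor_ext_sliceLeft fun f =>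
    tensor_ext_sliceLeft fun f' => ?_)
  have := h f f'
  rwa [← slice_assoc] at this

variable (k V W A) in
/-- The map `(v ⊗ a) ⊗ (w ⊗ b) ↦ (v ⊗ w) ⊗ ab` underlying tensor products of coactions. -/
noncomputable def tensorMul : (V ⊗[k] A) ⊗[k] (W ⊗[k] A) →ₗ[k] (V ⊗[k] W) ⊗[k] A :=
  (LinearMap.mul' k A).lTensor (V ⊗[k] W) ∘ₗ
    (TensorProduct.tensorTensorTensorComm k V A W A).toLinearMap

@[simp]
theorem tensorMul_tmul (v : V) (w : W) (a b : A) :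
    tensorMul k A V W ((v ⊗ₜ a) ⊗ₜ (w ⊗ₜ b)) = (v ⊗ₜ w) ⊗ₜ (a * b) := by
  simp [tensorMul]

theorem tensorMul_map (h : V →ₗ[k] V') (h' : W →ₗ[k] W') (φ : F)
    (s : V ⊗[k] A) (t : W ⊗[k] A) :
    tensorMul k B V' W' (TensorProduct.map h (φ : A →ₗ[k] B) s ⊗ₜ
        TensorProduct.map h' (φ : A →ₗ[k] B) t) =
      TensorProduct.map (TensorProduct.map h h') (φ : A →ₗ[k] B) (tensorMul k A V W (s ⊗ₜ t)) :=
  LinearMap.congr_fun (f := tensorMul k B V' W' ∘ₗ TensorProduct.map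
      (TensorProduct.map h (φ : A →ₗ[k] B)) (TensorProduct.map h' (φ : A →ₗ[k] B)))
    (g := TensorProduct.map (TensorProduct.map h h') (φ : A →ₗ[k] B) ∘ₗ tensorMul k A V W)
    (TensorProduct.ext_fourfold' fun v a w b => by simp) (s ⊗ₜ t)

theorem sliceLeft_tensorMul (f : V →ₗ[k] k) (f' : W →ₗ[k] k) (s : V ⊗[k] A) (t : W ⊗[k] A) :
    sliceLeft A (TensorProduct.dualDistrib k V W (f ⊗ₜ f')) (tensorMul k A V W (s ⊗ₜ t)) =
      sliceLeft A f s * sliceLeft A f' t :=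
  LinearMap.congr_fun (f := sliceLeft A (TensorProduct.dualDistrib k V W (f ⊗ₜ f')) ∘ₗ
      tensorMul k A V W)
    (g := LinearMap.mul' k A ∘ₗ TensorProduct.map (sliceLeft A f) (sliceLeft A f'))
    (TensorProduct.ext_fourfold' fun v a w b => by simp [mul_smul, smul_comm (f v)]) (s ⊗ₜ t)

theorem rTensor_tensorMul {D : Type*} [Ring D] [Algebra k D] {h : V ⊗[k] W →ₗ[k] D}
    {h₁ : V →ₗ[k] D} {h₂ : W →ₗ[k] D} (hh : ∀ v w, h (v ⊗ₜ w) = h₁ v * h₂ w)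
    (s : V ⊗[k] A) (t : W ⊗[k] A) :
    h.rTensor A (tensorMul k A V W (s ⊗ₜ t)) = h₁.rTensor A s * h₂.rTensor A t :=
  LinearMap.congr_fun (f := h.rTensor A ∘ₗ tensorMul k A V W)
    (g := LinearMap.mul' k (D ⊗[k] A) ∘ₗ TensorProduct.map (h₁.rTensor A) (h₂.rTensor A))
    (TensorProduct.ext_fourfold' fun v a w b => by simp [hh]) (s ⊗ₜ t)

end TensorMul

section TensorCoact

variable {k : Type u} [Field k] {A B : Type u} [Ring A] [Bialgebra k A] [Ring B] [Bialgebra k B]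
  {V W V' W' : Type u} [AddCommGroup V] [Module k V] [AddCommGroup W] [Module k W]
  [AddCommGroup V'] [Module k V'] [AddCommGroup W'] [Module k W']
  {ρV : V →ₗ[k] V ⊗[k] A} {ρW : W →ₗ[k] W ⊗[k] A} {ρV' : V' →ₗ[k] V' ⊗[k] A}
  {ρW' : W' →ₗ[k] W' ⊗[k] A} {F : Type*} [FunLike F A B] [AlgHomClass F k A B]

theorem tensorCoact_tmul (ρV : V →ₗ[k] V ⊗[k] A) (ρW : W →ₗ[k] W ⊗[k] A) (v : V) (w : W) :
    tensorCoact k A ρV ρW (v ⊗ₜ w) = tensorMul k A V W (ρV v ⊗ₜ ρW w) :=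
  rfl

theorem coeff_tensorCoact (f : V →ₗ[k] k) (f' : W →ₗ[k] k) (v : V) (w : W) :
    coeff (tensorCoact k A ρV ρW) (TensorProduct.dualDistrib k V W (f ⊗ₜ f')) (v ⊗ₜ w) =
      coeff ρV f v * coeff ρW f' w :=
  sliceLeft_tensorMul f f' (ρV v) (ρW w)

theorem IsComodHom.tensorCoact {h : V →ₗ[k] V'} {h' : W →ₗ[k] W'}
    (hh : IsComodHom k A ρV ρV' h) (hh' : IsComodHom k A ρW ρW' h') :
    IsComodHom k A (tensorCoact k A ρV ρW) (tensorCoact k A ρV' ρW') (TensorProduct.map h h') :=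
  TensorProduct.ext' fun v w => by
    simp only [LinearMap.comp_apply, TensorProduct.map_tmul, tensorCoact_tmul, hh.apply, hh'.apply]
    exact tensorMul_map h h' (AlgHom.id k A) (ρV v) (ρW w)

theorem cores_tensorCoact (φ : F) (ρV : V →ₗ[k] V ⊗[k] A) (ρW : W →ₗ[k] W ⊗[k] A) :
    cores k A (φ : A →ₗ[k] B) (tensorCoact k A ρV ρW) =
      tensorCoact k B (cores k A (φ : A →ₗ[k] B) ρV) (cores k A (φ : A →ₗ[k] B) ρW) :=
  TensorProduct.ext' fun v w => by
    have := tensorMul_map (.id : V →ₗ[k] V) (.id : W →ₗ[k] W) φ (ρV v) (ρW w)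
    rw [TensorProduct.map_id] at this
    exact this.symm

theorem HasChar.tensorCoact {φ : F} {g g' : B} (hV : HasChar k A (φ : A →ₗ[k] B) ρV g)
    (hW : HasChar k A (φ : A →ₗ[k] B) ρW g') :
    HasChar k A (φ : A →ₗ[k] B) (tensorCoact k A ρV ρW) (g * g') := by
  refine LinearMap.congr_fun (g := (TensorProduct.mk k _ B).flip (g * g'))
    (TensorProduct.ext' fun v w => ?_)
  rw [cores_tensorCoact, tensorCoact_tmul, hV v, hW w, tensorMul_tmul]
  rfl

theorem comul_coeff_tensorCoact (hV : IsComod k A ρV) (hW : IsComod k A ρW) (f : V →ₗ[k] k)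
    (f' : W →ₗ[k] k) (t : V ⊗[k] W) :
    Coalgebra.comul (coeff (QG.tensorCoact k A ρV ρW)
        (TensorProduct.dualDistrib k V W (f ⊗ₜ f')) t) =
      (coeff (QG.tensorCoact k A ρV ρW) (TensorProduct.dualDistrib k V W (f ⊗ₜ f'))).rTensor A
        (QG.tensorCoact k A ρV ρW t) := by
  refine LinearMap.congr_fun (f := Coalgebra.comul ∘ₗ coeff _ _) (g := LinearMap.rTensor A _ ∘ₗ
    QG.tensorCoact k A ρV ρW) (TensorProduct.ext' fun v w => ?_) t
  rw [LinearMap.comp_apply, LinearMap.comp_apply, tensorCoact_tmul,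
    rTensor_tensorMul (coeff_tensorCoact f f'), coeff_tensorCoact, Bialgebra.comul_mul,
    hV.comul_coeff, hW.comul_coeff]

theorem act_counit_tensorCoact (hV : IsComod k A ρV) (hW : IsComod k A ρW) (t : V ⊗[k] W) :
    act (QG.tensorCoact k A ρV ρW) Coalgebra.counit t = t := by
  have sliceRight_tensorMul : sliceRight (V ⊗[k] W) Coalgebra.counit ∘ₗ tensorMul k A V W =
      TensorProduct.map (sliceRight V Coalgebra.counit) (sliceRight W Coalgebra.counit) :=
    TensorProduct.ext_fourfold' fun v a w b => by
      simp [TensorProduct.smul_tmul', smul_smul, mul_comm]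
  refine LinearMap.congr_fun (f := act _ Coalgebra.counit) (g := .id)
    (TensorProduct.ext' fun v w => ?_) t
  refine (LinearMap.congr_fun sliceRight_tensorMul (ρV v ⊗ₜ ρW w)).trans ?_
  exact congrArg₂ (· ⊗ₜ[k] ·) (hV.counit v) (hW.counit w)

theorem IsComod.tensorCoact (hV : IsComod k A ρV) (hW : IsComod k A ρW) :
    IsComod k A (tensorCoact k A ρV ρW) where
  coassoc t := by
    rw [LinearEquiv.coe_coe, LinearEquiv.eq_symm_apply]
    refine tensor_ext_sliceLeft_dualDistrib fun f f' => ?_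
    rw [sliceLeft_assoc_rTensor, sliceLeft_lTensor]
    exact (comul_coeff_tensorCoact hV hW f f' t).symm
  counit := act_counit_tensorCoact hV hW

variable (k A) in
/-- The coaction `a ↦ a ⊗ 1` on `k`, the unit for the tensor product of coactions. -/
noncomputable def trivCoact : k →ₗ[k] k ⊗[k] A :=
  (TensorProduct.mk k k A).flip 1

theorem isComod_trivCoact : IsComod k A (trivCoact k A) :=
  isComod_iff_coeff.2 ⟨fun f => LinearMap.ext fun a => by
    simp [coeff, trivCoact, Algebra.TensorProduct.one_def, TensorProduct.smul_tmul'],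
    fun f a => by simp [coeff, trivCoact]⟩

variable (k A) in
/-- The trivial comodule. -/
noncomputable def SimpleComodule.triv : SimpleComodule k A where
  V := k
  ρ := trivCoact k A
  isComod := isComod_trivCoact
  isSimple := ⟨isSubcomod_top _, bot_ne_top.symm, fun U _ _ => eq_bot_or_eq_top U⟩

theorem isComodHom_rid :
    IsComodHom k A (tensorCoact k A ρV (trivCoact k A)) ρV
      (TensorProduct.rid k V).toLinearMap := by
  have rid_tensorMul (a : k) : (TensorProduct.rid k V).toLinearMap.rTensor A ∘ₗ
      tensorMul k A V k ∘ₗ (TensorProduct.mk k _ _).flip (a ⊗ₜ 1) = LinearMap.lsmul k _ a :=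
    TensorProduct.ext' fun v b => by simp [TensorProduct.smul_tmul']
  refine TensorProduct.ext' fun v a => ?_
  refine .trans ?_ (LinearMap.congr_fun (rid_tensorMul a) (ρV v)).symm
  simp

end TensorCoact

section Grading

variable {k : Type u} [Field k] {A : Type u} [Ring A] [HopfAlgebra k A] {M : Type*} [Group M]

variable (k A) in
/-- A map from the simple comodules to a group is a grading if it is compatible with tensor
products; gradings correspond to the central bialgebra maps into group algebras. -/
def IsGrading (γ : SimpleComodQuot k A → M) : Prop :=
  ∀ U V W : SimpleComodule k A, IsConstituent k A U.ρ (tensorCoact k A V.ρ W.ρ) →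
    γ U.cls = γ V.cls * γ W.cls

theorem IsGrading.map_triv {γ : SimpleComodQuot k A → M} (hγ : IsGrading k A γ) :
    γ (SimpleComodule.triv k A).cls = 1 := by
  have triv_constituent : IsConstituent k A (trivCoact k A)
      (tensorCoact k A (trivCoact k A) (trivCoact k A)) := by
    refine ⟨(TensorProduct.rid k k).symm.toLinearMap, fun h0 => ?_, isComodHom_rid.symm⟩
    exact one_ne_zero ((LinearEquiv.map_eq_zero_iff _).1 (LinearMap.congr_fun h0 (1 : k)))
  have mul_self := hγ (.triv k A) (.triv k A) (.triv k A) triv_constituent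
  exact left_eq_mul.1 mul_self

end Grading

section GroupAlgebra

variable {k : Type u} [Field k] {A : Type u} [Ring A] [HopfAlgebra k A] {M : Type u} [Group M]
  {γ : SimpleComodQuot k A → M} {χ : A →ₗ[k] MonoidAlgebra k M}

theorem map_one_of_hasChar (hγ : IsGrading k A γ)
    (hχ : ∀ X : SimpleComodule k A, HasChar k A χ X.ρ (MonoidAlgebra.of k M (γ X.cls))) :
    χ 1 = 1 := by
  have char_one : HasChar k A χ (trivCoact k A) (MonoidAlgebra.of k M 1) :=
    hγ.map_triv ▸ hχ (.triv k A)
  simpa [coeff, trivCoact, MonoidAlgebra.one_def] using hasChar_iff_coeff.1 char_one .id 1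

theorem map_mul_of_hasChar (hA : IsCosemisimple k A) (hγ : IsGrading k A γ)
    (hχ : ∀ X : SimpleComodule k A, HasChar k A χ X.ρ (MonoidAlgebra.of k M (γ X.cls)))
    (x y : A) : χ (x * y) = χ x * χ y := by
  have hχ_tensor (X Y : SimpleComodule k A) : HasChar k A χ (tensorCoact k A X.ρ Y.ρ)
      (MonoidAlgebra.of k M (γ X.cls * γ Y.cls)) :=
    .of_simple hA (X.isComod.tensorCoact Y.isComod) fun Z hZ => hγ Z X Y hZ ▸ hχ Z
  suffices h : (LinearMap.mul k A).compr₂ χ = (LinearMap.mul k _).compl₁₂ χ χ from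
    LinearMap.congr_fun (LinearMap.congr_fun h x) y
  refine hA.hom_ext_coeff fun X f v => hA.hom_ext_coeff fun Y f' w => ?_
  have := hasChar_iff_coeff.1 (hχ_tensor X Y) (TensorProduct.dualDistrib k _ _ (f ⊗ₜ f')) (v ⊗ₜ w)
  rw [coeff_tensorCoact] at this
  simp only [LinearMap.compr₂_apply, LinearMap.compl₁₂_apply, LinearMap.mul_apply']
  rw [this, hasChar_iff_coeff.1 (hχ X), hasChar_iff_coeff.1 (hχ Y), map_mul,
    TensorProduct.dualDistrib_apply, smul_mul_smul_comm]

theorem counit_comp_of_hasChar (hA : IsCosemisimple k A)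
    (hχ : ∀ X : SimpleComodule k A, HasChar k A χ X.ρ (MonoidAlgebra.of k M (γ X.cls))) :
    Coalgebra.counit ∘ₗ χ = Coalgebra.counit :=
  hA.hom_ext_coeff fun X f v => by
    rw [LinearMap.comp_apply, hasChar_iff_coeff.1 (hχ X), X.isComod.counit_coeff, map_smul,
      (MonoidAlgebra.isGroupLikeElem_of _).counit_eq_one, smul_eq_mul, mul_one]

theorem map_comp_comul_of_hasChar (hA : IsCosemisimple k A)
    (hχ : ∀ X : SimpleComodule k A, HasChar k A χ X.ρ (MonoidAlgebra.of k M (γ X.cls))) :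
    TensorProduct.map χ χ ∘ₗ Coalgebra.comul = Coalgebra.comul ∘ₗ χ :=
  hA.hom_ext_coeff fun X f v => by
    rw [← LinearMap.rTensor_comp_lTensor, LinearMap.comp_apply, LinearMap.comp_apply,
      (hχ X).lTensor_comul_coeff X.isComod, LinearMap.rTensor_tmul, LinearMap.comp_apply,
      hasChar_iff_coeff.1 (hχ X), map_smul, (MonoidAlgebra.isGroupLikeElem_of _).comul_eq_tmul_self,
      TensorProduct.smul_tmul']

theorem IsGrading.exists_bialgHom (hA : IsCosemisimple k A) (hγ : IsGrading k A γ) :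
    ∃ χ : A →ₐc[k] MonoidAlgebra k M, ∀ X : SimpleComodule k A,
      HasChar k A (χ : A →ₗ[k] MonoidAlgebra k M) X.ρ (MonoidAlgebra.of k M (γ X.cls)) := by
  obtain ⟨χ, hχ⟩ := hA.exists_apply_coeff fun x => MonoidAlgebra.of k M (γ x)
  replace hχ X := hasChar_iff_coeff.2 (hχ X)
  refine ⟨.ofAlgHom (.ofLinearMap χ (map_one_of_hasChar hγ hχ) (map_mul_of_hasChar hA hγ hχ))
    ?_ ?_, hχ⟩
  · exact AlgHom.toLinearMap_injective (counit_comp_of_hasChar hA hχ)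
  · exact AlgHom.toLinearMap_injective (map_comp_comul_of_hasChar hA hχ)

theorem HasChar.map_antipode_coeff_mul {B V : Type u} [Ring B] [Algebra k B] [AddCommGroup V]
    [Module k V] {ρV : V →ₗ[k] V ⊗[k] A} {F : Type*} [FunLike F A B] [AlgHomClass F k A B] {φ : F}
    {g : B} (h : HasChar k A (φ : A →ₗ[k] B) ρV g) (hV : IsComod k A ρV) (f : V →ₗ[k] k) (v : V) :
    φ (HopfAlgebra.antipode k (coeff ρV f v)) * g = algebraMap k B (f v) := by
  have map_mul_antipode (t : A ⊗[k] A) :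
      φ (LinearMap.mul' k A ((HopfAlgebra.antipode k).rTensor A t)) =
        LinearMap.mul' k B (TensorProduct.map ((φ : A →ₗ[k] B) ∘ₗ HopfAlgebra.antipode k) .id
          ((φ : A →ₗ[k] B).lTensor A t)) :=
    LinearMap.congr_fun (f := (φ : A →ₗ[k] B) ∘ₗ LinearMap.mul' k A ∘ₗ
      (HopfAlgebra.antipode k).rTensor A) (g := LinearMap.mul' k B ∘ₗ TensorProduct.map _ .id ∘ₗ
      (φ : A →ₗ[k] B).lTensor A) (TensorProduct.ext' fun a b => by simp) t
  have := map_mul_antipode (Coalgebra.comul (coeff ρV f v))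
  rw [HopfAlgebra.mul_antipode_rTensor_comul_apply, h.lTensor_comul_coeff hV, hV.counit_coeff]
    at this
  simpa [AlgHomClass.commutes] using this.symm

theorem exists_map_eq_of_hasChar {φ : A →ₐc[k] MonoidAlgebra k M}
    (hφ : ∀ X : SimpleComodule k A,
      HasChar k A (φ : A →ₗ[k] MonoidAlgebra k M) X.ρ (MonoidAlgebra.of k M (γ X.cls)))
    (hγ : Subgroup.closure (Set.range γ) = ⊤) (m : M) : ∃ a, φ a = MonoidAlgebra.of k M m := by
  induction (hγ ▸ Subgroup.mem_top m : m ∈ Subgroup.closure (Set.range γ)) using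
    Subgroup.closure_induction'' with
  | mem x hx =>
    obtain ⟨x, rfl⟩ := hx
    obtain ⟨X, rfl⟩ := SimpleComodule.cls_surjective x
    obtain ⟨f, v, hfv⟩ := X.isSimple.exists_dual_eq_one
    exact ⟨coeff X.ρ f v, by simpa [hfv] using hasChar_iff_coeff.1 (hφ X) f v⟩
  | inv_mem x hx =>
    obtain ⟨x, rfl⟩ := hx
    obtain ⟨X, rfl⟩ := SimpleComodule.cls_surjective x
    obtain ⟨f, v, hfv⟩ := X.isSimple.exists_dual_eq_one
    refine ⟨HopfAlgebra.antipode k (coeff X.ρ f v),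
      left_inv_eq_right_inv (a := MonoidAlgebra.of k M (γ X.cls)) ?_ ?_⟩
    · rw [(hφ X).map_antipode_coeff_mul X.isComod, hfv, map_one]
    · exact (map_mul _ _ _).symm.trans ((congrArg _ (mul_inv_cancel _)).trans (map_one _))
  | one => exact ⟨1, by rw [map_one, map_one]⟩
  | mul x y _ _ hx hy =>
    obtain ⟨a, ha⟩ := hx
    obtain ⟨b, hb⟩ := hy
    exact ⟨a * b, by simp only [map_mul, ha, hb]⟩

theorem surjective_of_hasChar {φ : A →ₐc[k] MonoidAlgebra k M}
    (hφ : ∀ X : SimpleComodule k A,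
      HasChar k A (φ : A →ₗ[k] MonoidAlgebra k M) X.ρ (MonoidAlgebra.of k M (γ X.cls)))
    (hγ : Subgroup.closure (Set.range γ) = ⊤) : Function.Surjective φ := by
  intro z
  induction z using MonoidAlgebra.induction_linear with
  | zero => exact ⟨0, map_zero φ⟩
  | add x y hx hy =>
    obtain ⟨a, rfl⟩ := hx
    obtain ⟨b, rfl⟩ := hy
    exact ⟨a + b, map_add φ a b⟩
  | single m r =>
    obtain ⟨a, ha⟩ := exists_map_eq_of_hasChar hφ hγ m
    exact ⟨r • a, by rw [map_smul, ha]; simp⟩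

end GroupAlgebra

section ChainGroup

variable {k : Type u} [Field k] {G Hh : Type u} [Ring G] [HopfAlgebra k G] [Ring Hh]
  [HopfAlgebra k Hh] {π : G →ₐc[k] Hh}

theorem chainGen_eq_mul {U V W : SimpleComodule k G} {h : U.V →ₗ[k] V.V ⊗[k] W.V}
    (hh : IsComodHom k Hh (cores k G (π : G →ₗ[k] Hh) U.ρ)
      (cores k G (π : G →ₗ[k] Hh) (tensorCoact k G V.ρ W.ρ)) h) (h0 : h ≠ 0) :
    chainGen k G Hh π U.cls = chainGen k G Hh π V.cls * chainGen k G Hh π W.cls :=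
  PresentedGroup.mk_eq_mk_of_mul_inv_mem ⟨U, V, W, ⟨h, h0, hh⟩, rfl⟩

theorem isGrading_chainGen : IsGrading k G (chainGen k G Hh π) :=
  fun _ _ _ ⟨_, h0, hh⟩ => chainGen_eq_mul (hh.cores _) h0

theorem chainGen_eq_of_hom {V V' : SimpleComodule k G} {h : V.V →ₗ[k] V'.V}
    (hh : IsComodHom k Hh (cores k G (π : G →ₗ[k] Hh) V.ρ) (cores k G (π : G →ₗ[k] Hh) V'.ρ) h)
    (h0 : h ≠ 0) : chainGen k G Hh π V.cls = chainGen k G Hh π V'.cls := by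
  have chainGen_eq_mul_triv := chainGen_eq_mul (W := .triv k G)
    ((isComodHom_rid.symm.cores (π : G →ₗ[k] Hh)).comp hh)
    fun h' => h0 ((LinearMap.cancel_left (TensorProduct.rid k V'.V).symm.injective).1
      (h'.trans (LinearMap.comp_zero _).symm))
  rwa [isGrading_chainGen.map_triv, mul_one] at chainGen_eq_mul_triv

theorem chainGen_eq_of_isConstituent (hH : IsCosemisimple k Hh) {T : SimpleComodule k Hh}
    {V V' : SimpleComodule k G} (hV : IsConstituent k Hh T.ρ (cores k G (π : G →ₗ[k] Hh) V.ρ))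
    (hV' : IsConstituent k Hh T.ρ (cores k G (π : G →ₗ[k] Hh) V'.ρ)) :
    chainGen k G Hh π V.cls = chainGen k G Hh π V'.cls := by
  obtain ⟨p, p0, hp⟩ := hH.exists_hom_of_isConstituent (V.isComod.cores π) T hV
  obtain ⟨i, i0, hi⟩ := hV'
  exact chainGen_eq_of_hom (hi.comp hp) fun h =>
    p0 ((LinearMap.cancel_left (hi.injective_of_ne_zero T.isSimple i0)).1
      (h.trans (LinearMap.comp_zero _).symm))

theorem exists_cls_eq_chainGen (hG : IsCosemisimple k G) (hH : IsCosemisimple k Hh)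
    (hπ : Function.Surjective π) :
    ∃ γ : SimpleComodQuot k Hh → ChainGroup k G Hh π, ∀ (T : SimpleComodule k Hh)
      (V : SimpleComodule k G), IsConstituent k Hh T.ρ (cores k G (π : G →ₗ[k] Hh) V.ρ) →
        γ T.cls = chainGen k G Hh π V.cls := by
  choose V hV using exists_isConstituent_cores hG hH hπ
  refine ⟨Quot.lift (fun T => chainGen k G Hh π (V T).cls) fun T T' ⟨e, he⟩ => ?_,
    fun T V' hV' => chainGen_eq_of_isConstituent hH (hV T) hV'⟩
  obtain ⟨i, i0, hi⟩ := hV T'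
  refine chainGen_eq_of_isConstituent hH (hV T) ⟨i ∘ₗ e.toLinearMap, fun h => i0 ?_, hi.comp he⟩
  exact (LinearMap.cancel_right e.surjective).1 h

theorem isGrading_of_cls_eq_chainGen (hG : IsCosemisimple k G) (hH : IsCosemisimple k Hh)
    (hπ : Function.Surjective π) {γ : SimpleComodQuot k Hh → ChainGroup k G Hh π}
    (hγ : ∀ (T : SimpleComodule k Hh) (V : SimpleComodule k G),
      IsConstituent k Hh T.ρ (cores k G (π : G →ₗ[k] Hh) V.ρ) →
        γ T.cls = chainGen k G Hh π V.cls) :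
    IsGrading k Hh γ := by
  rintro T T₁ T₂ ⟨h, h0, hh⟩
  obtain ⟨V, hV⟩ := exists_isConstituent_cores hG hH hπ T
  obtain ⟨V₁, hV₁⟩ := exists_isConstituent_cores hG hH hπ T₁
  obtain ⟨V₂, hV₂⟩ := exists_isConstituent_cores hG hH hπ T₂
  rw [hγ T V hV, hγ T₁ V₁ hV₁, hγ T₂ V₂ hV₂]
  obtain ⟨p, p0, hp⟩ := hH.exists_hom_of_isConstituent (V.isComod.cores π) T hV
  obtain ⟨i₁, i₁0, hi₁⟩ := hV₁
  obtain ⟨i₂, i₂0, hi₂⟩ := hV₂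
  have injective : Function.Injective (TensorProduct.map i₁ i₂ ∘ₗ h) :=
    (TensorProduct.map_injective_of_flat_flat _ _ (hi₁.injective_of_ne_zero T₁.isSimple i₁0)
      (hi₂.injective_of_ne_zero T₂.isSimple i₂0)).comp (hh.injective_of_ne_zero T.isSimple h0)
  have hom := ((hi₁.tensorCoact hi₂).comp hh).comp hp
  rw [← cores_tensorCoact] at hom
  exact chainGen_eq_mul hom fun h' =>
    p0 ((LinearMap.cancel_left injective).1 (h'.trans (LinearMap.comp_zero _).symm))

theorem small_presentedGroup {α : Type*} [Small.{u} α] (R : Set (FreeGroup α)) :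
    Small.{u} (PresentedGroup R) :=
  have : Small.{u} (FreeGroup α) := small_map (FreeGroup.freeGroupCongr (equivShrink α)).toEquiv
  small_of_surjective (PresentedGroup.mk_surjective R)

theorem exists_hasChar_chainGen (hG : IsCosemisimple k G) (hH : IsCosemisimple k Hh)
    (hπ : Function.Surjective π) :
    ∃ (M : Type u) (_ : Group M) (e : ChainGroup k G Hh π ≃* M) (χ : Hh →ₐc[k] MonoidAlgebra k M),
      ∀ X : SimpleComodule k G,
        HasChar k G ((χ.comp π : G →ₐc[k] MonoidAlgebra k M) : G →ₗ[k] MonoidAlgebra k M) X.ρ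
          (MonoidAlgebra.of k M (e (chainGen k G Hh π X.cls))) := by
  obtain ⟨γ, hγ⟩ := exists_cls_eq_chainGen hG hH hπ
  have := hG.small_simpleComodQuot
  have : Small.{u} (ChainGroup k G Hh π) := small_presentedGroup (chainRels k G Hh π)
  obtain ⟨M, _, ⟨e⟩⟩ : ∃ (M : Type u) (_ : Group M), Nonempty (ChainGroup k G Hh π ≃* M) :=
    ⟨Shrink.{u} (ChainGroup k G Hh π), inferInstance, ⟨Shrink.mulEquiv.symm⟩⟩
  have grading : IsGrading k Hh (fun x => e (γ x)) := fun T T₁ T₂ h =>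
    (congrArg e (isGrading_of_cls_eq_chainGen hG hH hπ hγ T T₁ T₂ h)).trans (map_mul e _ _)
  obtain ⟨χ, hχ⟩ := grading.exists_bialgHom hH
  exact ⟨M, _, e, χ, fun X => hasChar_cores.1 <|
    .of_simple hH (X.isComod.cores π) fun T hT => hγ T X hT ▸ hχ T⟩

end ChainGroup

section CanonicalMap

variable {k : Type u} [Field k]

theorem IsCosemisimple.exists_eq_of_hasChar {C D : Type u} [AddCommGroup C] [Module k C]
    [Coalgebra k C] [AddCommGroup D] [Module k D] [Coalgebra k D] (hC : IsCosemisimple k C)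
    {κ : C →ₗ[k] D} (hκ : Function.Surjective κ) {γ : SimpleComodQuot k C → GroupLike k D}
    (hγ : ∀ X : SimpleComodule k C, HasChar k C κ X.ρ (γ X.cls)) (a : GroupLike k D) :
    ∃ x, γ x = a := by
  by_contra ha
  refine (linearIndep_groupLikeVal (R := k) (A := D)).notMem_span_image (s := Set.range γ) ha ?_
  obtain ⟨c, hc⟩ := hκ a
  have mkQ_comp_eq_zero :
      (Submodule.span k (GroupLike.val '' Set.range γ)).mkQ ∘ₗ κ = 0 :=
    hC.hom_ext_coeff fun X f v => by
      rw [LinearMap.comp_apply, hasChar_iff_coeff.1 (hγ X)]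
      exact (Submodule.Quotient.mk_eq_zero _).2
        (Submodule.smul_mem _ _ (Submodule.subset_span ⟨_, ⟨X.cls, rfl⟩, rfl⟩))
  exact hc ▸ (Submodule.Quotient.mk_eq_zero _).1 (LinearMap.congr_fun mkQ_comp_eq_zero c)

variable {G Hh B : Type u} [Ring G] [HopfAlgebra k G] [Ring Hh] [HopfAlgebra k Hh] [Ring B]
  [HopfAlgebra k B] {π : G →ₐc[k] Hh}

theorem closure_range_chainGen : Subgroup.closure (Set.range (chainGen k G Hh π)) = ⊤ :=
  PresentedGroup.closure_range_of _

theorem closure_range_map_chainGen {M : Type*} [Group M] (e : ChainGroup k G Hh π ≃* M) :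
    Subgroup.closure (Set.range fun x => e (chainGen k G Hh π x)) = ⊤ := by
  rw [Set.range_comp' e, ← MonoidHom.coe_coe e, ← MonoidHom.map_closure, closure_range_chainGen]
  exact Subgroup.map_top_of_surjective _ e.surjective

theorem exists_chainGroup_hom {β : Hh →ₐc[k] B}
    (hβ : ∀ X : SimpleComodule k G, ∃ g : B,
      HasChar k G ((β.comp π : G →ₐc[k] B) : G →ₗ[k] B) X.ρ g) :
    ∃ can : ChainGroup k G Hh π →* GroupLike k B, ∀ X : SimpleComodule k G,
      HasChar k G ((β.comp π : G →ₐc[k] B) : G →ₗ[k] B) X.ρ (can (chainGen k G Hh π X.cls)) := by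
  obtain ⟨c, hc⟩ := exists_char_cls hβ
  have isGroupLikeElem (x : SimpleComodQuot k G) : IsGroupLikeElem k (c x) := by
    obtain ⟨X, rfl⟩ := SimpleComodule.cls_surjective x
    exact (hc X).isGroupLikeElem X.isComod X.isSimple
  let γ (x : SimpleComodQuot k G) : GroupLike k B := ⟨c x, isGroupLikeElem x⟩
  have relations : ∀ r ∈ chainRels k G Hh π, FreeGroup.lift γ r = 1 := by
    rintro _ ⟨U, V, W, ⟨h, h0, hh⟩, rfl⟩
    rw [map_mul, map_inv, mul_inv_eq_one, map_mul, FreeGroup.lift_apply_of,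
      FreeGroup.lift_apply_of, FreeGroup.lift_apply_of]
    exact GroupLike.val_injective ((hasChar_cores.2 (hc U)).eq_of_hom
      (hasChar_cores.2 ((hc V).tensorCoact (hc W))) hh h0)
  refine ⟨PresentedGroup.toGroup relations, fun X => ?_⟩
  exact (PresentedGroup.toGroup.of relations (x := X.cls)) ▸ hc X

theorem injective_of_map_chainGen {M : Type*} [Group M] {can : ChainGroup k G Hh π →* GroupLike k B}
    {e : ChainGroup k G Hh π ≃* M} (t : B →ₐ[k] MonoidAlgebra k M)
    (ht : ∀ x, t (can (chainGen k G Hh π x)) = MonoidAlgebra.of k M (e (chainGen k G Hh π x))) :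
    Function.Injective can := by
  have comp_eq : ((t : B →* MonoidAlgebra k M).comp (GroupLike.valMonoidHom k B)).comp can =
      (MonoidAlgebra.of k M).comp e :=
    MonoidHom.eq_of_eqOn_dense closure_range_chainGen (Set.eqOn_range.2 (funext ht))
  intro a b hab
  refine e.injective (MonoidAlgebra.of_injective (R := k) ?_)
  calc MonoidAlgebra.of k M (e a) = t (can a) := (DFunLike.congr_fun comp_eq a).symm
    _ = t (can b) := by rw [hab]
    _ = MonoidAlgebra.of k M (e b) := DFunLike.congr_fun comp_eq b

end CanonicalMap

end QG

open QG in
/-- For an embedding `H ≤ G` of linearly reductive quantum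
groups, the canonical map `can : C(G,H) → Ẑ(G,H)` sending the generator `g_V`
to the central character of `V` restricted to the relative center
`Z(G,H) = Z(G) ∩ H` is a group isomorphism (onto the group of characters of
`Z(G,H)`, i.e. of group-like elements of `O(Z(G,H))`, viewed inside the unit
group). -/
theorem statement_15 (k : Type u) [Field k] [IsAlgClosed k]
    (G Hh : Type u) [Ring G] [HopfAlgebra k G] [Ring Hh] [HopfAlgebra k Hh]
    (π : G →ₐc[k] Hh) (hsurj : Function.Surjective π)
    (hcssG : IsCosemisimple k G) (hcssH : IsCosemisimple k Hh)
    (Z : Type u) [Ring Z] [HopfAlgebra k Z]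
    (ζ : G →ₐc[k] Z) (hζsurj : Function.Surjective ζ)
    (hζcentral : IsCentralMap k G (ζ : G →ₗ[k] Z))
    (hζlargest : ∀ (Z' : Type u) [Ring Z'] [HopfAlgebra k Z'] (ζ' : G →ₐc[k] Z'),
      Function.Surjective ζ' → IsCentralMap k G (ζ' : G →ₗ[k] Z') →
      ∃ t : Z →ₐc[k] Z', t.comp ζ = ζ')
    (ZH : Type u) [Ring ZH] [HopfAlgebra k ZH]
    (α : Z →ₐc[k] ZH) (β : Hh →ₐc[k] ZH)
    (hαsurj : Function.Surjective α) (hβsurj : Function.Surjective β)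
    (hcomm : α.comp ζ = β.comp π)
    (hpushout : ∀ (W : Type u) [Ring W] [HopfAlgebra k W]
      (α' : Z →ₐc[k] W) (β' : Hh →ₐc[k] W), α'.comp ζ = β'.comp π →
      ∃! t : ZH →ₐc[k] W, t.comp α = α' ∧ t.comp β = β') :
    ∃ can : ChainGroup k G Hh π →* ZHˣ,
      (∀ (x : SimpleComodQuot k G) (X : SimpleComodule k G), X.cls = x →
        ∀ g : Z, IsGroupLike k Z g → HasCentralChar k G (ζ : G →ₗ[k] Z) X g →
          ((can (chainGen k G Hh π x) : ZHˣ) : ZH) = α g) ∧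
      Function.Injective can ∧
      (∀ h : ZH, IsGroupLike k ZH h →
        ∃ c : ChainGroup k G Hh π, ((can c : ZHˣ) : ZH) = h) ∧
      (∀ c : ChainGroup k G Hh π, IsGroupLike k ZH ((can c : ZHˣ) : ZH)) := by
  have char_comp {X : SimpleComodule k G} {g : Z} (hg : HasCentralChar k G (ζ : G →ₗ[k] Z) X g) :
      HasChar k G ((β.comp π : G →ₐc[k] ZH) : G →ₗ[k] ZH) X.ρ (α g) :=
    hcomm ▸ HasChar.comp hg (α : Z →ₗ[k] ZH)
  obtain ⟨can, hcan⟩ := exists_chainGroup_hom fun X =>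
    (hζcentral.exists_hasChar X).imp' α fun _ => char_comp
  obtain ⟨M, _, e, χ, hχ⟩ := exists_hasChar_chainGen hcssG hcssH hsurj
  obtain ⟨tZ, htZ⟩ := hζlargest _ (χ.comp π)
    (surjective_of_hasChar hχ (closure_range_map_chainGen e))
    (isCentralMap_of_hasChar hcssG fun X => ⟨_, hχ X⟩)
  obtain ⟨t, ⟨-, rfl⟩, -⟩ := hpushout _ tZ χ htZ
  refine ⟨(GroupLike.toUnits k).comp can, ?_, ?_, fun h hh => ?_, fun c => ?_⟩
  · rintro _ X rfl g - hg
    exact (hcan X).eq_of_isSimpleComod X.isSimple (char_comp hg)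
  · have map_can (x : SimpleComodQuot k G) : t (can (chainGen k G Hh π x)) =
        MonoidAlgebra.of k M (e (chainGen k G Hh π x)) := by
      obtain ⟨X, rfl⟩ := SimpleComodule.cls_surjective x
      exact ((hcan X).comp (t : ZH →ₗ[k] MonoidAlgebra k M)).eq_of_isSimpleComod X.isSimple (hχ X)
    have can_injective := injective_of_map_chainGen (t : ZH →ₐ[k] MonoidAlgebra k M) map_can
    exact fun a b hab => can_injective (GroupLike.val_injective (congrArg Units.val hab))
  · have surjective_comp : Function.Surjective (β.comp π) := hcomm ▸ hαsurj.comp hζsurj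
    obtain ⟨x, hx⟩ := hcssG.exists_eq_of_hasChar (γ := can ∘ chainGen k G Hh π) surjective_comp hcan
      ⟨h, hh.1, hh.2⟩
    exact ⟨chainGen k G Hh π x, congrArg GroupLike.val hx⟩
  · exact ⟨(can c).isGroupLikeElem_val.counit_eq_one,
      (can c).isGroupLikeElem_val.comul_eq_tmul_self⟩
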